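/- arXiv:q-alg/9607016 — 4 statements merged into one kernel-verified Lean document; each statement's English description precedes it below -/
import Mathlib

section
/- Let P be a finite partially ordered set. A rope of P is a finite sequence x₀, x₁, …, x_k of elements of P such that x₀ is a minimal element of P and x_{j+1} covers x_j for each j = 0, …, k−1; identify a rope with its underlying subset {x₀, …, x_k} of P. Then the set P̄ of all ropes of P, partially ordered by inclusion of underlying sets, is a forest: for any ropes r, s, t with r ⊆ t and s ⊆ t, one has r ⊆ s or s ⊆ r. -/
/-!
A rope is a chain, and a rope `r = {x 0, …, x k}` contained in a rope `t` is an initial segment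
of `t`. Indeed, only `x 0` lies below the minimal element `x 0`; and an element of `t` below
`x (j + 1)` is comparable to `x j`, so it lies below `x j` or, by the covering relation, equals
`x j` or `x (j + 1)`. Two initial segments of the same chain are comparable.
-/

/-- A *rope* of a finite poset `P` is (the underlying set of) a finite sequence starting at a
minimal element of `P` in which each element covers the previous one. -/
def IsRope {P : Type*} [PartialOrder P] (S : Set P) : Prop :=
  ∃ (k : ℕ) (x : Fin (k + 1) → P),
    IsMin (x 0) ∧ (∀ j : Fin k, x j.castSucc ⋖ x j.succ) ∧ S = Set.range x

lemma IsRope.le_total {P : Type*} [PartialOrder P] {t : Set P} (ht : IsRope t)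
    {a b : P} (ha : a ∈ t) (hb : b ∈ t) : a ≤ b ∨ b ≤ a := by
  obtain ⟨k, x, -, hx, rfl⟩ := ht
  obtain ⟨i, rfl⟩ := ha
  obtain ⟨j, rfl⟩ := hb
  have hmono : StrictMono x := Fin.strictMono_iff_lt_succ.2 fun i => (hx i).lt
  exact (_root_.le_total i j).imp (fun h => hmono.monotone h) (fun h => hmono.monotone h)

/-- A rope contained in a rope `t` is an initial segment of `t`. -/
lemma IsRope.mem_of_le {P : Type*} [PartialOrder P] {r t : Set P} (hr : IsRope r)
    (ht : IsRope t) (hrt : r ⊆ t) {a b : P} (ha : a ∈ t) (hb : b ∈ r) (hab : a ≤ b) :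
    a ∈ r := by
  obtain ⟨k, x, hmin, hx, rfl⟩ := hr
  obtain ⟨j, rfl⟩ := hb
  induction j using Fin.induction with
  | zero => exact ⟨0, le_antisymm (hmin hab) hab⟩
  | succ i ih =>
    rcases ht.le_total ha (hrt ⟨i.castSucc, rfl⟩) with h | h
    · exact ih h
    · rcases (hx i).eq_or_eq h hab with h | h
      · exact ⟨_, h.symm⟩
      · exact ⟨_, h.symm⟩

/-- The set of ropes of a finite poset, ordered by inclusion, is a forest: any two ropes
contained in a common rope are comparable. -/
theorem ropes_form_forest (P : Type*) [PartialOrder P] [Finite P]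
    (r s t : Set P) (hr : IsRope r) (hs : IsRope s) (ht : IsRope t)
    (hrt : r ⊆ t) (hst : s ⊆ t) : r ⊆ s ∨ s ⊆ r := by
  by_contra! h
  obtain ⟨h₁, h₂⟩ := h
  obtain ⟨a, har, has⟩ := Set.not_subset.1 h₁
  obtain ⟨b, hbs, hbr⟩ := Set.not_subset.1 h₂
  rcases ht.le_total (hrt har) (hst hbs) with h | h
  · exact has (hs.mem_of_le ht hst (hrt har) hbs h)
  · exact hbr (hr.mem_of_le ht hrt (hst hbs) har h)
end

section
/- Let X be the four-point circle poset P₄(S¹), i.e., the topological space on the set {x₁, x₂, x₃, x₄} whose topology is generated by the open sets {x₁}, {x₃}, {x₁, x₂, x₃} and {x₁, x₄, x₃}. Then the fundamental group of X (based at any point, say x₁) is isomorphic to the group of integers ℤ. -/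
/-!
The universal cover of the pseudocircle is the digital (Khalimsky) line: the integers, with even
points open and each odd point `n` having smallest neighbourhood `{n - 1, n, n + 1}`. Reduction
modulo `4` maps it onto the pseudocircle and exhibits the latter as the quotient by the translation
action of `4ℤ ≅ ℤ`, each smallest neighbourhood being disjoint from its translates
(`KhalimskyLine.isAddQuotientCoveringMap_proj`). So the fundamental group is `ℤ` as soon as the
line is simply connected.

The line is path connected because neighbouring points are comparable for specialization. Loops
are null-homotopic because the minimum of two integers is a continuous binary operation
(`KhalimskyLine.continuous_min`), and a path-connected space with a continuous semilattice operation
`m` is simply connected (`simplyConnectedSpace_of_idempotent`): for a loop `γ` at `x`, deforming the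
diagonal of the square `(s, t) ↦ m (γ s) (γ t)` to two of its sides gives `[γ] = [δ] * [δ]` with
`δ = m x γ`. Since `m x δ = δ`, the same identity for `δ` reads `[δ] = [δ] * [δ]`; hence `[δ] = 1`
and `[γ] = 1`.
-/

/-- The circle poset (pseudocircle) `P₄(S¹)`: the four-point space `{x₁, x₂, x₃, x₄}`
(realized as `Fin 4` with `x₁ = 0, x₂ = 1, x₃ = 2, x₄ = 3`) whose topology is generated by
the open sets `{x₁}`, `{x₃}`, `{x₁, x₂, x₃}` and `{x₁, x₄, x₃}`. -/
def Pseudocircle : Type := Fin 4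

instance : TopologicalSpace Pseudocircle :=
  TopologicalSpace.generateFrom
    { {(0 : Fin 4)}, {(2 : Fin 4)},
      {(0 : Fin 4), (1 : Fin 4), (2 : Fin 4)}, {(0 : Fin 4), (3 : Fin 4), (2 : Fin 4)} }

/-- The point `x₁` of the pseudocircle. -/
def Pseudocircle.x₁ : Pseudocircle := (0 : Fin 4)

open Topology unitInterval Filter

/-- The diagonal of a square is homotopic to the path along two of its sides. -/
lemma homotopic_diagonal_of_square {Y : Type*} [TopologicalSpace Y] {x y z : Y}
    (G : C(I × I, Y)) (p : Path x z) (q : Path x y) (r : Path y z)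
    (hp : ∀ t, p t = G (t, t)) (hq : ∀ t, q t = G (t, 0)) (hr : ∀ t, r t = G (1, t)) :
    p.Homotopic (q.trans r) := by
  obtain rfl : x = G (0, 0) := by rw [← hp, p.source]
  obtain rfl : y = G (1, 0) := by rw [← hq, q.target]
  obtain rfl : z = G (1, 1) := by rw [← hp, p.target]
  let d : Path ((0, 0) : I × I) (1, 1) := ⟨⟨fun t => (t, t), by fun_prop⟩, rfl, rfl⟩
  let a : Path ((0, 0) : I × I) (1, 0) := ⟨⟨fun t => (t, 0), by fun_prop⟩, rfl, rfl⟩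
  let b : Path ((1, 0) : I × I) (1, 1) := ⟨⟨fun t => (1, t), by fun_prop⟩, rfl, rfl⟩
  have hp' : p = d.map G.continuous := by ext t; exact hp t
  have hq' : q = a.map G.continuous := by ext t; exact hq t
  have hr' : r = b.map G.continuous := by ext t; exact hr t
  rw [hp', hq', hr', ← Path.map_trans]
  have : ContractibleSpace I := (convex_Icc (0 : ℝ) 1).contractibleSpace ⟨0, by simp⟩
  exact (SimplyConnectedSpace.paths_homotopic d (a.trans b)).map G

/-- A path-connected topological semilattice is simply connected. -/
lemma simplyConnectedSpace_of_idempotent {Y : Type*} [TopologicalSpace Y] [PathConnectedSpace Y]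
    (m : Y → Y → Y) (hm : Continuous fun z : Y × Y => m z.1 z.2) (idem : ∀ x, m x x = x)
    (comm : ∀ x y, m x y = m y x) (assoc : ∀ x y z, m (m x y) z = m x (m y z)) :
    SimplyConnectedSpace Y := by
  refine simply_connected_iff_loops_nullhomotopic.mpr ⟨inferInstance, fun x γ => ?_⟩
  have hx : Continuous (m x) := hm.comp (by fun_prop : Continuous fun y : Y => (x, y))
  let push (γ : Path x x) : Path x x := (γ.map hx).cast (idem x).symm (idem x).symm
  have push_apply (γ : Path x x) (t : I) : push γ t = m x (γ t) := rfl
  have key (γ : Path x x) : γ.Homotopic ((push γ).trans (push γ)) := by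
    refine homotopic_diagonal_of_square ⟨fun z => m (γ z.1) (γ z.2), ?_⟩ _ _ _ ?_ ?_ ?_
    · exact hm.comp (by fun_prop : Continuous fun z : I × I => (γ z.1, γ z.2))
    · intro t; simp [idem]
    · intro t; simp [push_apply, comm x]
    · intro t; simp [push_apply]
  have push_push : push (push γ) = push γ := by
    ext t; simp only [push_apply]; rw [← assoc, idem]
  let cls (γ : Path x x) : FundamentalGroup Y x := Path.Homotopic.Quotient.mk γ
  have cls_eq (γ : Path x x) : cls γ = cls (push γ) * cls (push γ) :=
    Path.Homotopic.Quotient.eq.mpr (key γ)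
  have h₁ : cls (push γ) = 1 := by
    have h := cls_eq (push γ)
    rw [push_push] at h
    exact left_eq_mul.mp h
  have h₂ : cls γ = 1 := by rw [cls_eq, h₁, one_mul]
  exact Path.Homotopic.Quotient.eq.mp h₂

/-- The digital line: the underlying set is `ℤ`, and a set is open if it contains both integer
neighbours of each of its odd points. -/
@[ext]
structure KhalimskyLine where
  /-- The integer underlying a point of the digital line. -/
  val : ℤ

namespace KhalimskyLine

instance : TopologicalSpace KhalimskyLine where
  IsOpen s := ∀ n ∈ s, Odd n.val → ∀ m : KhalimskyLine, |m.val - n.val| ≤ 1 → m ∈ s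
  isOpen_univ := by simp
  isOpen_inter s t hs ht n hn ho m hm := ⟨hs n hn.1 ho m hm, ht n hn.2 ho m hm⟩
  isOpen_sUnion S hS := by
    rintro n ⟨s, hs, hn⟩ ho m hm
    exact ⟨s, hs, hS s hs n hn ho m hm⟩

/-- The smallest neighbourhood of a point: `{n}` for `n` even, `{n - 1, n, n + 1}` for `n` odd. -/
def nhd (n : KhalimskyLine) : Set KhalimskyLine :=
  {m | m.val = n.val ∨ n.val % 2 = 1 ∧ (m.val = n.val - 1 ∨ m.val = n.val + 1)}

lemma isOpen_iff {s : Set KhalimskyLine} :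
    IsOpen s ↔ ∀ n ∈ s, Odd n.val → ∀ m : KhalimskyLine, |m.val - n.val| ≤ 1 → m ∈ s := Iff.rfl

lemma nhds_eq (n : KhalimskyLine) : 𝓝 n = 𝓟 (nhd n) := by
  apply le_antisymm
  · rw [Filter.le_principal_iff]
    refine IsOpen.mem_nhds (isOpen_iff.mpr ?_) (Or.inl rfl)
    intro k hk ho m hm
    rw [Int.odd_iff] at ho
    rw [abs_le] at hm
    simp only [nhd, Set.mem_ofPred_eq] at hk ⊢
    omega
  · refine le_nhds_iff.mpr fun s hn hs => Filter.mem_principal.mpr ?_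
    intro m hm
    simp only [nhd, Set.mem_ofPred_eq] at hm
    rcases hm with hm | ⟨ho, hm⟩
    · rwa [KhalimskyLine.ext hm]
    · exact isOpen_iff.mp hs n hn (Int.odd_iff.mpr ho) m (by rw [abs_le]; omega)

lemma continuous_min :
    Continuous fun z : KhalimskyLine × KhalimskyLine => mk (min z.1.val z.2.val) := by
  refine continuous_iff_continuousAt.mpr fun ⟨a, b⟩ => ?_
  rw [ContinuousAt, nhds_prod_eq, nhds_eq, nhds_eq, nhds_eq, Filter.prod_principal_principal,
    Filter.tendsto_principal_principal]
  rintro ⟨c, d⟩ ⟨hc, hd⟩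
  simp only [nhd, Set.mem_ofPred_eq] at hc hd ⊢
  omega

lemma joined_of_mem_nhd {m n : KhalimskyLine} (h : m ∈ nhd n) : Joined m n := by
  have hs : m ⤳ n := by
    rw [specializes_iff_pure, nhds_eq]
    simpa using h
  exact (hs.joinedIn (F := Set.univ) trivial trivial).joined

lemma joined_succ (n : ℤ) : Joined (mk n) (mk (n + 1)) := by
  rcases Int.emod_two_eq_zero_or_one n with h | h
  · refine joined_of_mem_nhd ?_
    simp only [nhd, Set.mem_ofPred_eq]; omega
  · exact (joined_of_mem_nhd (Or.inr ⟨h, Or.inr rfl⟩)).symm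

instance : PathConnectedSpace KhalimskyLine where
  nonempty := ⟨mk 0⟩
  joined := by
    have h (n : ℤ) : Joined (mk 0) (mk n) := by
      induction n with
      | zero => exact Joined.refl _
      | succ n ih => exact ih.trans (joined_succ n)
      | pred n ih =>
        refine ih.trans ?_
        have := joined_succ (-(n : ℤ) - 1)
        rw [sub_add_cancel] at this
        exact this.symm
    exact fun x y => (h x.val).symm.trans (h y.val)

instance : SimplyConnectedSpace KhalimskyLine :=
  simplyConnectedSpace_of_idempotent (fun a b => mk (min a.val b.val)) continuous_min
    (by simp) (by simp [min_comm]) (by simp [min_assoc])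

/-- An integer `k` acts on the digital line as translation by `4 * k`. -/
instance : AddAction ℤ KhalimskyLine where
  vadd k n := ⟨4 * k + n.val⟩
  zero_vadd n := by
    change mk (4 * 0 + n.val) = n
    simp
  add_vadd j k n := by
    change mk (4 * (j + k) + n.val) = mk (4 * j + (4 * k + n.val))
    congr 1; ring

lemma vadd_val (k : ℤ) (n : KhalimskyLine) : (k +ᵥ n).val = 4 * k + n.val := rfl

/-- Reduction modulo `4`, as a map into `Fin 4`. -/
def residue (n : KhalimskyLine) : Fin 4 := Fin.ofNat 4 (n.val % 4).toNat

lemma residue_eq_iff {n : KhalimskyLine} {j : Fin 4} : residue n = j ↔ n.val % 4 = (j : ℕ) := by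
  have hj := j.isLt
  rw [Fin.ext_iff, residue, Fin.val_ofNat]
  omega

/-- Reduction modulo `4`, from the digital line onto the pseudocircle. -/
def proj (n : KhalimskyLine) : Pseudocircle := residue n

lemma continuous_proj : Continuous proj := by
  refine continuous_generateFrom_iff.mpr ?_
  have aux (S : Set (Fin 4)) (hS : ∀ n : KhalimskyLine, n.val % 2 = 1 → residue n ∈ S →
      ∀ m ∈ nhd n, residue m ∈ S) : IsOpen (proj ⁻¹' S) := by
    refine isOpen_iff_mem_nhds.mpr fun n hn => ?_
    rw [nhds_eq, Filter.mem_principal]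
    intro m hm
    rcases Int.emod_two_eq_zero_or_one n.val with h | h
    · have : m = n := by
        ext; simp only [nhd, Set.mem_ofPred_eq] at hm; omega
      rwa [this]
    · exact hS n h hn m hm
  rintro S (rfl | rfl | rfl | rfl)
  · exact aux {0} (by
      intro n ho hn m hm
      simp only [Set.mem_singleton_iff, residue_eq_iff, nhd,
        Set.mem_ofPred_eq, Fin.isValue, Fin.coe_ofNat_eq_mod] at hn hm ⊢
      omega)
  · exact aux {2} (by
      intro n ho hn m hm
      simp only [Set.mem_singleton_iff, residue_eq_iff, nhd,
        Set.mem_ofPred_eq, Fin.isValue, Fin.coe_ofNat_eq_mod] at hn hm ⊢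
      omega)
  · exact aux {0, 1, 2} (by
      intro n ho hn m hm
      simp only [Set.mem_insert_iff, Set.mem_singleton_iff, residue_eq_iff, nhd,
        Set.mem_ofPred_eq, Fin.isValue, Fin.coe_ofNat_eq_mod] at hn hm ⊢
      omega)
  · exact aux {0, 3, 2} (by
      intro n ho hn m hm
      simp only [Set.mem_insert_iff, Set.mem_singleton_iff, residue_eq_iff, nhd,
        Set.mem_ofPred_eq, Fin.isValue, Fin.coe_ofNat_eq_mod] at hn hm ⊢
      omega)

lemma isOpenMap_proj : IsOpenMap proj := by
  refine isOpenMap_iff_nhds_le.mpr fun n => ?_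
  rw [nhds_eq, map_principal, le_principal_iff]
  have aux (S : Set (Fin 4)) (hS : S ∈ ({ {(0 : Fin 4)}, {(2 : Fin 4)},
      {(0 : Fin 4), (1 : Fin 4), (2 : Fin 4)}, {(0 : Fin 4), (3 : Fin 4), (2 : Fin 4)} } :
        Set (Set (Fin 4)))) (hn : residue n ∈ S)
      (h : ∀ j ∈ S, ∃ m ∈ nhd n, m.val % 4 = (j : ℕ)) : proj '' nhd n ∈ 𝓝 (proj n) := by
    refine mem_of_superset
      (IsOpen.mem_nhds (TopologicalSpace.isOpen_generateFrom_of_mem hS) hn) ?_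
    intro j hj
    obtain ⟨m, hm, hmj⟩ := h j hj
    exact ⟨m, hm, residue_eq_iff.mpr hmj⟩
  have self : n ∈ nhd n := Or.inl rfl
  have hcases : n.val % 4 = 0 ∨ n.val % 4 = 1 ∨ n.val % 4 = 2 ∨ n.val % 4 = 3 := by omega
  rcases hcases with h | h | h | h
  · refine aux {0} (by simp) (residue_eq_iff.mpr (by simpa using h)) ?_
    rintro j rfl
    exact ⟨n, self, by simpa using h⟩
  · refine aux {0, 1, 2} (by simp) (Or.inr (Or.inl (residue_eq_iff.mpr (by simpa using h)))) ?_
    rintro j (rfl | rfl | rfl)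
    · exact ⟨⟨n.val - 1⟩, Or.inr ⟨by omega, Or.inl rfl⟩, by simp; omega⟩
    · exact ⟨n, self, by simpa using h⟩
    · exact ⟨⟨n.val + 1⟩, Or.inr ⟨by omega, Or.inr rfl⟩, by simp; omega⟩
  · refine aux {2} (by simp) (residue_eq_iff.mpr (by simpa using h)) ?_
    rintro j rfl
    exact ⟨n, self, by simpa using h⟩
  · refine aux {0, 3, 2} (by simp) (Or.inr (Or.inl (residue_eq_iff.mpr (by simpa using h)))) ?_
    rintro j (rfl | rfl | rfl)
    · exact ⟨⟨n.val + 1⟩, Or.inr ⟨by omega, Or.inr rfl⟩, by simp; omega⟩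
    · exact ⟨n, self, by simpa using h⟩
    · exact ⟨⟨n.val - 1⟩, Or.inr ⟨by omega, Or.inl rfl⟩, by simp; omega⟩

lemma proj_surjective : Function.Surjective proj := fun j =>
  have hj : residue ⟨Fin.val (n := 4) j⟩ = j := residue_eq_iff.mpr (by
    have := Fin.isLt (n := 4) j
    dsimp only
    omega)
  ⟨_, hj⟩

lemma isAddQuotientCoveringMap_proj : IsAddQuotientCoveringMap proj ℤ where
  __ := isOpenMap_proj.isQuotientMap continuous_proj proj_surjective
  continuous_const_vadd k := by
    refine continuous_iff_continuousAt.mpr fun n => ?_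
    rw [ContinuousAt, nhds_eq, nhds_eq, tendsto_principal_principal]
    intro m hm
    simp only [nhd, Set.mem_ofPred_eq, vadd_val] at hm ⊢
    omega
  apply_eq_iff_mem_orbit {a b} := by
    rw [AddAction.mem_orbit_iff]
    have hb : b.val % 4 = (residue b : ℕ) := residue_eq_iff.mp rfl
    constructor
    · intro h
      have ha := residue_eq_iff.mp (show residue a = residue b from h)
      refine ⟨(a.val - b.val) / 4, ?_⟩
      ext
      rw [vadd_val]
      omega
    · rintro ⟨k, rfl⟩
      refine residue_eq_iff.mpr (?_ : (k +ᵥ b).val % 4 = (residue b : ℕ))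
      rw [vadd_val]
      omega
  disjoint n := by
    refine ⟨nhd n, by rw [nhds_eq]; exact mem_principal_self _, ?_⟩
    rintro k ⟨_, ⟨m, hm, rfl⟩, hm'⟩
    simp only [nhd, Set.mem_ofPred_eq, vadd_val] at hm hm'
    omega

end KhalimskyLine

/-- The fundamental group of the circle poset `P₄(S¹)` is isomorphic to `ℤ`. -/
theorem pseudocircle_fundamentalGroup :
    Nonempty (FundamentalGroup Pseudocircle Pseudocircle.x₁ ≃* Multiplicative ℤ) := by
  have h₀ : KhalimskyLine.proj ⟨0⟩ = Pseudocircle.x₁ :=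
    (KhalimskyLine.residue_eq_iff (j := 0)).mpr (by simp)
  exact ⟨(KhalimskyLine.isAddQuotientCoveringMap_proj.fundamentalGroupEquiv ⟨⟨0⟩, h₀⟩).trans
    MulOpposite.opMulEquiv.symm⟩
end

section
/- Let Y be the six-point sphere poset P₆(S²), i.e., the topological space on the set {x₁, x₂, x₃, x₄, x₅, x₆} whose topology is generated by the open sets {x₁}, {x₃}, {x₁, x₂, x₃}, {x₁, x₄, x₃}, {x₁, x₂, x₃, x₄, x₅} and {x₁, x₂, x₃, x₄, x₆}. Then the fundamental group of Y (based at any point, say x₁) is trivial: π₁(P₆(S²)) = {0}. -/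
/-!
The open sets `U₅ = {x₁, x₂, x₃, x₄, x₅}` and `U₆ = {x₁, x₂, x₃, x₄, x₆}` cover the sphere poset.
Each is the smallest open set around one of its points (`x₅`, respectively `x₆`), hence a cone with
that apex, hence contractible (`isSimplyConnected_of_apex`). The intersection
`{x₁, x₂, x₃, x₄}` is the union of the two cones `{x₁, x₂, x₃}` and `{x₁, x₄, x₃}` meeting in `x₁`,
so it is path connected. The theorem therefore follows from the simply connected case of van
Kampen's theorem (`homotopic_refl_of_open_cover`): if a space is covered by simply connected open
sets containing the base point, with path connected pairwise intersections, then every loop is null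
homotopic.

For the latter, cut a loop `γ` into pieces, each inside one member of the cover. By induction on
the number of pieces, the initial part of `γ` up to a cut point can be deformed into *every* member
`c j` of the cover containing that cut point: if the last piece lies in `c i`, the whole initial
part can be deformed into `c i`, and there it is homotopic to any path with the same endpoints, in
particular to one in `c i ∩ c j`. At the end, `γ` is homotopic to a loop in a simply connected set.
-/

/-- The sphere poset `P₆(S²)`: the six-point space `{x₁, …, x₆}` (realized as `Fin 6` with
`xᵢ = i - 1`) whose topology is generated by the open sets `{x₁}`, `{x₃}`, `{x₁, x₂, x₃}`,
`{x₁, x₄, x₃}`, `{x₁, x₂, x₃, x₄, x₅}` and `{x₁, x₂, x₃, x₄, x₆}`. -/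
def SpherePoset : Type := Fin 6

instance : TopologicalSpace SpherePoset :=
  TopologicalSpace.generateFrom
    { {(0 : Fin 6)}, {(2 : Fin 6)},
      {(0 : Fin 6), (1 : Fin 6), (2 : Fin 6)},
      {(0 : Fin 6), (3 : Fin 6), (2 : Fin 6)},
      {(0 : Fin 6), (1 : Fin 6), (2 : Fin 6), (3 : Fin 6), (4 : Fin 6)},
      {(0 : Fin 6), (1 : Fin 6), (2 : Fin 6), (3 : Fin 6), (5 : Fin 6)} }

/-- The point `x₁` of the sphere poset. -/
def SpherePoset.x₁ : SpherePoset := (0 : Fin 6)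

open Set Topology unitInterval

namespace SpherePoset

/-- A set `s` contained in every open neighbourhood of one of its points `m` (the apex) is
contractible, so simply connected: the homotopy stands still at times `t < 1` and
jumps to `m` at time `1`. -/
theorem isSimplyConnected_of_apex {X : Type*} [TopologicalSpace X] {s : Set X} {m : X}
    (hms : m ∈ s) (hm : ∀ O, IsOpen O → m ∈ O → s ⊆ O) : IsSimplyConnected s := by
  classical
  have hcontr : ContractibleSpace s := by
    rw [contractible_iff_id_nullhomotopic]
    refine ⟨⟨m, hms⟩, ⟨{
      toFun := fun p => if p.1 < 1 then p.2 else ⟨m, hms⟩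
      continuous_toFun := ?_
      map_zero_left := fun x => by simp
      map_one_left := fun x => by simp }⟩⟩
    refine continuous_def.2 fun W hW => ?_
    obtain ⟨O, hO, rfl⟩ := isOpen_induced_iff.1 hW
    by_cases hmO : m ∈ O
    · convert isOpen_univ
      refine eq_univ_of_forall fun p => ?_
      exact hm O hO hmO (Subtype.property _)
    · convert (isOpen_Iio (a := (1 : I))).prod hW using 1
      ext ⟨t, x⟩
      by_cases ht : t < 1 <;> simp [ht, hmO]
  exact SimplyConnectedSpace.ofContractible s

theorem homotopic_of_forall_mem {X : Type*} [TopologicalSpace X] {s : Set X}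
    (hs : IsSimplyConnected s) {x y : X} (p q : Path x y) (hp : ∀ t, p t ∈ s)
    (hq : ∀ t, q t ∈ s) : p.Homotopic q := by
  have := hs.simplyConnectedSpace
  have hx : x ∈ s := by simpa using hp 0
  have hy : y ∈ s := by simpa using hp 1
  let p' : Path (⟨x, hx⟩ : s) ⟨y, hy⟩ :=
    { toFun := fun t => ⟨p t, hp t⟩
      source' := by simp
      target' := by simp }
  let q' : Path (⟨x, hx⟩ : s) ⟨y, hy⟩ :=
    { toFun := fun t => ⟨q t, hq t⟩
      source' := by simp
      target' := by simp }
  exact (SimplyConnectedSpace.paths_homotopic p' q').map ⟨Subtype.val, continuous_subtype_val⟩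

/-- The simply connected case of van Kampen's theorem. -/
theorem homotopic_refl_of_open_cover {X ι : Type*} [TopologicalSpace X] {x₀ : X} (c : ι → Set X)
    (hopen : ∀ i, IsOpen (c i)) (hcover : ∀ x, ∃ i, x ∈ c i)
    (hsc : ∀ i, IsSimplyConnected (c i)) (hx₀ : ∀ i, x₀ ∈ c i)
    (hpc : ∀ i j, IsPathConnected (c i ∩ c j)) (γ : Path x₀ x₀) :
    γ.Homotopic (Path.refl x₀) := by
  obtain ⟨t, ht0, hmono, ⟨n, hn⟩, hsub⟩ :=
    exists_monotone_Icc_subset_open_cover_unitInterval (c := fun i => γ ⁻¹' c i)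
      (fun i => (hopen i).preimage γ.continuous)
      (fun s _ => mem_iUnion.2 (hcover (γ s)))
  have key : ∀ k j, γ (t k) ∈ c j → ∃ q : Path (γ 0) (γ (t k)),
      (∀ s, q s ∈ c j) ∧ (γ.subpath 0 (t k)).Homotopic q := by
    intro k
    induction k with
    | zero =>
      rw [ht0]
      intro j hj
      exact ⟨Path.refl _, fun s => by simpa using hj, by simpa using .refl _⟩
    | succ k ih =>
      intro j hj
      obtain ⟨i, hi⟩ := hsub k
      have hle : t k ≤ t (k + 1) := hmono k.le_succ
      obtain ⟨p, hp, hpγ⟩ := ih i (hi ⟨le_rfl, hle⟩)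
      have hγ0 : ∀ l, γ 0 ∈ c l := fun l => by simpa using hx₀ l
      have hjoin : JoinedIn (c i ∩ c j) (γ 0) (γ (t (k + 1))) :=
        (hpc i j).joinedIn _ ⟨hγ0 i, hγ0 j⟩ _ ⟨hi ⟨hle, le_rfl⟩, hj⟩
      obtain ⟨q, hq⟩ := hjoin
      refine ⟨q, fun s => (hq s).2, ?_⟩
      have hpiece : ∀ s, γ.subpath (t k) (t (k + 1)) s ∈ c i := fun s => by
        have hs : γ.subpath (t k) (t (k + 1)) s ∈ γ '' Icc (t k) (t (k + 1)) := by
          rw [← γ.range_subpath_of_le _ _ hle]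
          exact mem_range_self s
        obtain ⟨u, hu, hus⟩ := hs
        rw [← hus]
        exact hi hu
      have htrans : ∀ s, p.trans (γ.subpath (t k) (t (k + 1))) s ∈ c i := fun s => by
        have hs := mem_range_self (f := p.trans (γ.subpath (t k) (t (k + 1)))) s
        rw [Path.trans_range] at hs
        rcases hs with ⟨u, hu⟩ | ⟨u, hu⟩
        · exact hu ▸ hp u
        · exact hu ▸ hpiece u
      have h₁ : (γ.subpath 0 (t (k + 1))).Homotopic
          ((γ.subpath 0 (t k)).trans (γ.subpath (t k) (t (k + 1)))) :=
        Path.Homotopic.symm ⟨Path.Homotopy.subpathTransSubpath γ 0 (t k) (t (k + 1))⟩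
      exact (h₁.trans (hpγ.hcomp (.refl _))).trans
        (homotopic_of_forall_mem (hsc i) _ _ htrans fun s => (hq s).1)
  obtain ⟨i, -⟩ := hcover x₀
  have hend := key n i
  rw [hn n le_rfl] at hend
  obtain ⟨q, hq, hγq⟩ := hend (by simpa using hx₀ i)
  rw [Path.subpath_zero_one] at hγq
  -- `γ 0` and `γ 1` equal `x₀` only propositionally, hence the cast.
  have h₁ : γ.Homotopic (q.cast γ.source.symm γ.target.symm) := hγq
  exact h₁.trans (homotopic_of_forall_mem (hsc i) _ _ hq fun _ => hx₀ i)

/-- Whether `m` has no open neighbourhood smaller than `s` can be checked on generating sets. -/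
theorem subset_of_generateFrom {X : Type*} {g : Set (Set X)} {s : Set X} {m : X}
    (h : ∀ O ∈ g, m ∈ O → s ⊆ O) (O : Set X)
    (hO : IsOpen[TopologicalSpace.generateFrom g] O) (hmO : m ∈ O) : s ⊆ O := by
  induction hO with
  | basic O hO => exact h O hO hmO
  | univ => exact subset_univ s
  | inter A B _ _ hA hB => exact subset_inter (hA hmO.1) (hB hmO.2)
  | sUnion S _ hS =>
    obtain ⟨A, hA, hmA⟩ := hmO
    exact (hS A hA hmA).trans (subset_sUnion_of_mem hA)

/-- The smallest open set `{x₁, x₂, x₃}` containing `x₂`. -/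
def U₂ : Set SpherePoset := ({0, 1, 2} : Set (Fin 6))

/-- The smallest open set `{x₁, x₄, x₃}` containing `x₄`. -/
def U₄ : Set SpherePoset := ({0, 3, 2} : Set (Fin 6))

/-- The smallest open set `{x₁, x₂, x₃, x₄, x₅}` containing `x₅`. -/
def U₅ : Set SpherePoset := ({0, 1, 2, 3, 4} : Set (Fin 6))

/-- The smallest open set `{x₁, x₂, x₃, x₄, x₆}` containing `x₆`. -/
def U₆ : Set SpherePoset := ({0, 1, 2, 3, 5} : Set (Fin 6))

theorem isSimplyConnected_U₂ : IsSimplyConnected U₂ := by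
  refine isSimplyConnected_of_apex (m := (1 : Fin 6)) (by unfold U₂ SpherePoset; simp)
    (subset_of_generateFrom ?_)
  rintro O (rfl | rfl | rfl | rfl | rfl | rfl) <;> unfold U₂ SpherePoset <;>
    simp [insert_subset_iff]

theorem isSimplyConnected_U₄ : IsSimplyConnected U₄ := by
  refine isSimplyConnected_of_apex (m := (3 : Fin 6)) (by unfold U₄ SpherePoset; simp)
    (subset_of_generateFrom ?_)
  rintro O (rfl | rfl | rfl | rfl | rfl | rfl) <;> unfold U₄ SpherePoset <;>
    simp [insert_subset_iff]

theorem isSimplyConnected_U₅ : IsSimplyConnected U₅ := by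
  refine isSimplyConnected_of_apex (m := (4 : Fin 6)) (by unfold U₅ SpherePoset; simp)
    (subset_of_generateFrom ?_)
  rintro O (rfl | rfl | rfl | rfl | rfl | rfl) <;> unfold U₅ SpherePoset <;>
    simp [insert_subset_iff]

theorem isSimplyConnected_U₆ : IsSimplyConnected U₆ := by
  refine isSimplyConnected_of_apex (m := (5 : Fin 6)) (by unfold U₆ SpherePoset; simp)
    (subset_of_generateFrom ?_)
  rintro O (rfl | rfl | rfl | rfl | rfl | rfl) <;> unfold U₆ SpherePoset <;>
    simp [insert_subset_iff]

theorem U₅_inter_U₆ : U₅ ∩ U₆ = U₂ ∪ U₄ := by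
  unfold U₂ U₄ U₅ U₆ SpherePoset
  ext x
  fin_cases x <;> simp

theorem isPathConnected_U₅_inter_U₆ : IsPathConnected (U₅ ∩ U₆) := by
  rw [U₅_inter_U₆]
  exact isSimplyConnected_U₂.isPathConnected.union isSimplyConnected_U₄.isPathConnected
    ⟨(0 : Fin 6), by unfold U₂ SpherePoset; simp, by unfold U₄ SpherePoset; simp⟩

theorem mem_U₅_or_mem_U₆ (x : SpherePoset) : x ∈ U₅ ∨ x ∈ U₆ := by
  unfold U₅ U₆ SpherePoset at *
  fin_cases x <;> simp

theorem isOpen_U₅ : IsOpen U₅ :=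
  TopologicalSpace.isOpen_generateFrom_of_mem <|
    Or.inr <| Or.inr <| Or.inr <| Or.inr <| Or.inl rfl

theorem x₁_mem_U₅ : x₁ ∈ U₅ := by
  unfold x₁ U₅ SpherePoset
  simp

theorem isOpen_U₆ : IsOpen U₆ :=
  TopologicalSpace.isOpen_generateFrom_of_mem <|
    Or.inr <| Or.inr <| Or.inr <| Or.inr <| Or.inr rfl

theorem x₁_mem_U₆ : x₁ ∈ U₆ := by
  unfold x₁ U₆ SpherePoset
  simp

end SpherePoset

open SpherePoset in
/-- The fundamental group of the sphere poset `P₆(S²)` is trivial. -/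
theorem spherePoset_fundamentalGroup_trivial :
    Subsingleton (FundamentalGroup SpherePoset SpherePoset.x₁) := by
  have h : ∀ γ : Path x₁ x₁, γ.Homotopic (Path.refl x₁) := by
    refine homotopic_refl_of_open_cover (fun b : Bool => cond b U₅ U₆) ?_ ?_ ?_ ?_ ?_
    · exact Bool.forall_bool.2 ⟨isOpen_U₆, isOpen_U₅⟩
    · exact fun x => Bool.exists_bool.2 (mem_U₅_or_mem_U₆ x).symm
    · exact Bool.forall_bool.2 ⟨isSimplyConnected_U₆, isSimplyConnected_U₅⟩
    · exact Bool.forall_bool.2 ⟨x₁_mem_U₆, x₁_mem_U₅⟩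
    · rintro (_ | _) (_ | _)
      · simpa using isSimplyConnected_U₆.isPathConnected
      · simpa [inter_comm] using isPathConnected_U₅_inter_U₆
      · exact isPathConnected_U₅_inter_U₆
      · simpa using isSimplyConnected_U₅.isPathConnected
  change Subsingleton (Path.Homotopic.Quotient x₁ x₁)
  refine ⟨fun a b => ?_⟩
  induction a, b using Path.Homotopic.Quotient.ind₂ with
  | mk a b => exact Path.Homotopic.Quotient.eq.2 ((h a).trans (h b).symm)
end

section
/- Let Y be the six-point sphere poset P₆(S²), i.e., the topological space on the set {x₁, x₂, x₃, x₄, x₅, x₆} whose topology is generated by the open sets {x₁}, {x₃}, {x₁, x₂, x₃}, {x₁, x₄, x₃}, {x₁, x₂, x₃, x₄, x₅} and {x₁, x₂, x₃, x₄, x₆}. Then the second homotopy group of Y (based at any point, say x₁) is isomorphic to the group of integers: π₂(P₆(S²)) ≅ ℤ. -/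
/-!
The second homotopy group of the sphere poset, computed through the Hopf fibration.

Let `S` be the 2-sphere of unit imaginary quaternions, i.e. the solutions of `u * u = -1`. The map
`collapse : S → SpherePoset` records the first nonzero coordinate and its sign. Every continuous
map from a metric space to the poset factors through `collapse` (`exists_sphere_lift`), and two
points of `S` with the same collapse are never antipodal, so two such lifts are homotopic; thus
maps into the poset can be treated as maps into `S`.

The Hopf map sends a nonzero quaternion `g` to `g * qi * g⁻¹ ∈ S`, with fibres the cosets of the
nonzero complex numbers. A homotopy of maps into `S` is covered by conjugations
(`exists_conj_of_homotopy`), because for non-antipodal `u, v` conjugation by the explicit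
quaternion `rot v u` carries `u` to `v`. Hence a loop `f` on the square is covered by a nowhere zero quaternionic map
equal to `1` on three sides of the square and complex on the fourth side; the winding number there
is the degree of `f` (`HasDegree`). It exists (`exists_hasDegree`), depends only on the homotopy
class (`HasDegree.unique`), is additive (`HasDegree.concat`) and takes every integer value
(`exists_of_degree`).

If the degree is zero, the covering map can be changed to be `1` on the whole boundary
(`homotopic_const_of_hasDegree_zero`). It then contracts in `ℍ ∖ {0}`
(`loopOf_homotopic_const`): a `C¹` approximation has a cone of dimension at most three in the
four-dimensional space `ℍ`, so some constant near `1` can be reached by straight segments that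
avoid `0`. So the degree is an isomorphism onto `ℤ`.
-/


open scoped Topology

open scoped unitInterval Quaternion
open Quaternion

namespace SpherePosetPi2

noncomputable section

/-! ### The collapse of the sphere onto the poset -/

/-- The quaternion with the given coordinates, at the type `ℍ[ℝ]`. -/
def mkQ (r a b c : ℝ) : ℍ[ℝ] := ⟨r, a, b, c⟩

@[simp] lemma mkQ_re (r a b c : ℝ) : (mkQ r a b c).re = r := rfl

@[simp] lemma mkQ_imI (r a b c : ℝ) : (mkQ r a b c).imI = a := rfl

@[simp] lemma mkQ_imJ (r a b c : ℝ) : (mkQ r a b c).imJ = b := rfl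

@[simp] lemma mkQ_imK (r a b c : ℝ) : (mkQ r a b c).imK = c := rfl

/-- The quaternion unit `i`. -/
def qi : ℍ[ℝ] := mkQ 0 1 0 0

/-- The first nonzero entry of `(a, b, c)` and its sign, as a point of the sphere poset: the
minimal points `x₁, x₃` record `a`, the points `x₂, x₄` record `b`, the maximal points `x₅, x₆`
record `c`. -/
def lexSign (a b c : ℝ) : Fin 6 :=
  if 0 < a then 0 else if a < 0 then 2 else
  if 0 < b then 1 else if b < 0 then 3 else
  if 0 < c then 4 else 5

/-- The quotient map from the sphere of unit imaginary quaternions to the sphere poset: open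
hemispheres, open half-equators and the two remaining points are collapsed. -/
def collapse (q : ℍ[ℝ]) : Fin 6 := lexSign q.imI q.imJ q.imK

lemma qi_mul_qi : qi * qi = -1 := by
  ext <;> simp [qi]

lemma qi_ne_zero : qi ≠ 0 := fun h => by
  simpa [qi] using congrArg (fun q : ℍ[ℝ] => q.imI) h

lemma continuous_mk {K : Type*} [TopologicalSpace K] {r a b c : K → ℝ} (hr : Continuous r)
    (ha : Continuous a) (hb : Continuous b) (hc : Continuous c) :
    Continuous fun p => mkQ (r p) (a p) (b p) (c p) := by
  have : (fun p => mkQ (r p) (a p) (b p) (c p)) = fun p =>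
      r p • (1 : ℍ[ℝ]) + a p • mkQ 0 1 0 0 + b p • mkQ 0 0 1 0
        + c p • mkQ 0 0 0 1 := by
    funext p; ext <;> simp
  rw [this]; fun_prop

/-- The square roots of `-1` are the unit imaginary quaternions. -/
lemma sq_eq_neg_one {u : ℍ[ℝ]} (h : u * u = -1) :
    u.re = 0 ∧ u.imI ^ 2 + u.imJ ^ 2 + u.imK ^ 2 = 1 := by
  have h0 := congrArg (fun q : ℍ[ℝ] => q.re) h
  have h1 := congrArg (fun q : ℍ[ℝ] => q.imI) h
  have h2 := congrArg (fun q : ℍ[ℝ] => q.imJ) h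
  have h3 := congrArg (fun q : ℍ[ℝ] => q.imK) h
  simp at h0 h1 h2 h3
  have hr : u.re = 0 := by
    by_contra hr
    have e1 : u.imI = 0 := by
      apply mul_left_cancel₀ hr; linarith
    have e2 : u.imJ = 0 := by
      apply mul_left_cancel₀ hr; linarith
    have e3 : u.imK = 0 := by
      apply mul_left_cancel₀ hr; linarith
    rw [e1, e2, e3] at h0
    nlinarith
  refine ⟨hr, ?_⟩
  rw [hr] at h0
  linarith

lemma norm_of_sq {u : ℍ[ℝ]} (h : u * u = -1) : ‖u‖ = 1 := by
  have := congrArg norm h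
  rw [norm_mul, norm_neg, norm_one] at this
  nlinarith [norm_nonneg u]

lemma im_ne_zero_of_sq {u : ℍ[ℝ]} (h : u * u = -1) (h1 : u.imI = 0) (h2 : u.imJ = 0) :
    u.imK ≠ 0 := by
  intro h3
  have := (sq_eq_neg_one h).2
  rw [h1, h2, h3] at this
  norm_num at this

/-- The topology on the target is written out as `@Continuous` because `Fin 6` itself carries the
discrete topology. -/
lemma continuous_iff {K : Type*} [TopologicalSpace K] (f : K → Fin 6) :
    @Continuous K SpherePoset _ _ f ↔
      IsOpen {p | f p = 0} ∧ IsOpen {p | f p = 2} ∧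
      IsOpen {p | f p = 0 ∨ f p = 1 ∨ f p = 2} ∧
      IsOpen {p | f p = 0 ∨ f p = 3 ∨ f p = 2} ∧
      IsOpen {p | f p = 0 ∨ f p = 1 ∨ f p = 2 ∨ f p = 3 ∨ f p = 4} ∧
      IsOpen {p | f p = 0 ∨ f p = 1 ∨ f p = 2 ∨ f p = 3 ∨ f p = 5} := by
  refine continuous_generateFrom_iff.trans ⟨fun h => ?_, ?_⟩
  · exact ⟨h _ (Or.inl rfl), h _ (Or.inr (Or.inl rfl)), h _ (Or.inr (Or.inr (Or.inl rfl))),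
      h _ (Or.inr (Or.inr (Or.inr (Or.inl rfl)))),
      h _ (Or.inr (Or.inr (Or.inr (Or.inr (Or.inl rfl))))),
      h _ (Or.inr (Or.inr (Or.inr (Or.inr (Or.inr rfl)))))⟩
  · rintro ⟨h1, h2, h3, h4, h5, h6⟩ s (rfl | rfl | rfl | rfl | rfl | rfl)
    exacts [h1, h2, h3, h4, h5, h6]

lemma continuous_collapse {K : Type*} [TopologicalSpace K] {u : K → ℍ[ℝ]} (hu : Continuous u)
    (hsq : ∀ p, u p * u p = -1) : @Continuous K SpherePoset _ _ fun p => collapse (u p) := by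
  have ha : Continuous fun p => (u p).imI := continuous_imI.comp hu
  have hb : Continuous fun p => (u p).imJ := continuous_imJ.comp hu
  have hc : Continuous fun p => (u p).imK := continuous_imK.comp hu
  have hz : ∀ p, (u p).imI = 0 → (u p).imJ = 0 → (u p).imK ≠ 0 :=
    fun p => im_ne_zero_of_sq (hsq p)
  have o1 : IsOpen {p | 0 < (u p).imI} := isOpen_lt continuous_const ha
  have o2 : IsOpen {p | (u p).imI < 0} := isOpen_lt ha continuous_const
  have o3 : IsOpen {p | 0 < (u p).imJ} := isOpen_lt continuous_const hb
  have o4 : IsOpen {p | (u p).imJ < 0} := isOpen_lt hb continuous_const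
  have o5 : IsOpen {p | 0 < (u p).imK} := isOpen_lt continuous_const hc
  have o6 : IsOpen {p | (u p).imK < 0} := isOpen_lt hc continuous_const
  have key : ∀ p, (collapse (u p) = 0 ↔ 0 < (u p).imI) ∧ (collapse (u p) = 2 ↔ (u p).imI < 0) ∧
      (collapse (u p) = 1 ↔ (u p).imI = 0 ∧ 0 < (u p).imJ) ∧
      (collapse (u p) = 3 ↔ (u p).imI = 0 ∧ (u p).imJ < 0) ∧
      (collapse (u p) = 4 ↔ (u p).imI = 0 ∧ (u p).imJ = 0 ∧ 0 < (u p).imK) ∧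
      (collapse (u p) = 5 ↔ (u p).imI = 0 ∧ (u p).imJ = 0 ∧ (u p).imK < 0) := by
    intro p
    have h := hz p
    simp only [collapse, lexSign]
    generalize (u p).imI = a at *
    generalize (u p).imJ = b at *
    generalize (u p).imK = c at *
    rcases lt_trichotomy a 0 with ha | rfl | ha
    · simp [ha, ha.ne, not_lt.2 ha.le]
    · rcases lt_trichotomy b 0 with hb | rfl | hb
      · simp [hb, hb.ne, not_lt.2 hb.le]
      · rcases lt_or_gt_of_ne (h rfl rfl) with hc | hc
        · simp [hc, not_lt.2 hc.le]
        · simp [hc, not_lt.2 hc.le]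
      · simp [hb, hb.ne', not_lt.2 hb.le]
    · simp [ha, ha.ne', not_lt.2 ha.le]
  refine (continuous_iff _).2 ⟨?_, ?_, ?_, ?_, ?_, ?_⟩
  · convert o1 using 3 with p
    exact (key p).1
  · convert o2 using 3 with p
    exact (key p).2.1
  · convert (o1.union o2).union o3 using 1
    ext p; obtain ⟨k0, k2, k1, k3, k4, k5⟩ := key p
    simp only [Set.mem_ofPred_eq, Set.mem_union, k0, k1, k2]
    grind
  · convert (o1.union o2).union o4 using 1
    ext p; obtain ⟨k0, k2, k1, k3, k4, k5⟩ := key p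
    simp only [Set.mem_ofPred_eq, Set.mem_union, k0, k3, k2]
    grind
  · convert (((o1.union o2).union o3).union o4).union o5 using 1
    ext p; obtain ⟨k0, k2, k1, k3, k4, k5⟩ := key p
    simp only [Set.mem_ofPred_eq, Set.mem_union, k0, k1, k2, k3, k4]
    grind
  · convert (((o1.union o2).union o3).union o4).union o6 using 1
    ext p; obtain ⟨k0, k2, k1, k3, k4, k5⟩ := key p
    simp only [Set.mem_ofPred_eq, Set.mem_union, k0, k1, k2, k3, k5]
    grind

lemma exists_pos_iff_mem {K : Type*} [PseudoMetricSpace K] {U : Set K} (hU : IsOpen U) :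
    ∃ φ : K → ℝ, Continuous φ ∧ (∀ p ∈ U, 0 < φ p) ∧ ∀ p, p ∉ U → φ p = 0 := by
  by_cases hne : (Uᶜ).Nonempty
  · refine ⟨fun p => Metric.infDist p Uᶜ, Metric.continuous_infDist_pt _, fun p hp => ?_,
      fun p hp => Metric.infDist_zero_of_mem hp⟩
    exact (hU.isClosed_compl.notMem_iff_infDist_pos hne).1 (by simpa using hp)
  · refine ⟨fun _ => 1, continuous_const, fun _ _ => one_pos, fun p hp => ?_⟩
    exact absurd ⟨p, hp⟩ hne

lemma lexSign_smul {t : ℝ} (ht : 0 < t) (a b c : ℝ) :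
    lexSign (t * a) (t * b) (t * c) = lexSign a b c := by
  have hp : ∀ x, 0 < t * x ↔ 0 < x := fun x => mul_pos_iff_of_pos_left ht
  have hn : ∀ x, t * x < 0 ↔ x < 0 := fun x => by
    rw [← neg_pos, ← mul_neg, hp, neg_pos]
  simp only [lexSign, hp, hn]

/-- Every continuous map from a metric space to the sphere poset factors through `collapse`. The
coordinates of the lift are differences of functions whose positivity sets are the six basic open
sets; multiplying the last two coordinates by a function vanishing exactly on `A` forces the lift
to be `qi` there. -/
lemma exists_sphere_lift {K : Type*} [PseudoMetricSpace K] {f : K → Fin 6}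
    (hf : @Continuous K SpherePoset _ _ f) {A : Set K} (hA : IsClosed A) (hfA : ∀ p ∈ A, f p = 0) :
    ∃ u : K → ℍ[ℝ], Continuous u ∧ (∀ p, u p * u p = -1) ∧ (∀ p, collapse (u p) = f p) ∧
      ∀ p ∈ A, u p = qi := by
  obtain ⟨h1, h2, h3, h4, h5, h6⟩ := (continuous_iff f).1 hf
  obtain ⟨φ1, c1, p1, z1⟩ := exists_pos_iff_mem h1
  obtain ⟨φ2, c2, p2, z2⟩ := exists_pos_iff_mem h2
  obtain ⟨φ3, c3, p3, z3⟩ := exists_pos_iff_mem h3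
  obtain ⟨φ4, c4, p4, z4⟩ := exists_pos_iff_mem h4
  obtain ⟨φ5, c5, p5, z5⟩ := exists_pos_iff_mem h5
  obtain ⟨φ6, c6, p6, z6⟩ := exists_pos_iff_mem h6
  obtain ⟨l, cl, pl, zl⟩ := exists_pos_iff_mem hA.isOpen_compl
  let w : K → ℍ[ℝ] := fun p =>
    mkQ 0 (φ1 p - φ2 p) (l p * (φ3 p - φ4 p)) (l p * (φ5 p - φ6 p))
  have hw : Continuous w := continuous_mk continuous_const (c1.sub c2) (cl.mul (c3.sub c4))
    (cl.mul (c5.sub c6))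
  have hwf : ∀ p, collapse (w p) = f p ∧ w p ≠ 0 := by
    intro p
    have hne : (w p).imI ≠ 0 ∨ (w p).imJ ≠ 0 ∨ (w p).imK ≠ 0 → w p ≠ 0 := by
      rintro h h0; simp [h0] at h
    by_cases hpA : p ∈ A
    · have h0 : f p = 0 := hfA p hpA
      have e1 := p1 p (by simp [h0])
      have e2 := z2 p (by simp [h0])
      have : 0 < (w p).imI := by simp [w, e2, e1]
      exact ⟨by rw [h0, collapse, lexSign, if_pos this], hne (Or.inl this.ne')⟩
    · have hl := pl p hpA
      have hcases : ∀ y : Fin 6, y = 0 ∨ y = 1 ∨ y = 2 ∨ y = 3 ∨ y = 4 ∨ y = 5 := by decide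
      rcases hcases (f p) with h | h | h | h | h | h
      · have e1 := p1 p (by simp [h])
        have e2 := z2 p (by simp [h])
        have : 0 < (w p).imI := by simp [w, e2, e1]
        exact ⟨by rw [h, collapse, lexSign, if_pos this], hne (Or.inl this.ne')⟩
      · have e1 := z1 p (by simp [h])
        have e2 := z2 p (by simp [h])
        have e3 := p3 p (by simp [h])
        have e4 := z4 p (by simp [h])
        have i1 : (w p).imI = 0 := by simp [w, e1, e2]
        have i2 : 0 < (w p).imJ := by simp [w, e3, e4, hl]
        exact ⟨by simp [h, collapse, lexSign, i1, i2], hne (Or.inr (Or.inl i2.ne'))⟩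
      · have e1 := z1 p (by simp [h])
        have e2 := p2 p (by simp [h])
        have i1 : (w p).imI < 0 := by simp [w, e2, e1]
        exact ⟨by simp [h, collapse, lexSign, i1, not_lt.2 i1.le], hne (Or.inl i1.ne)⟩
      · have e1 := z1 p (by simp [h])
        have e2 := z2 p (by simp [h])
        have e3 := z3 p (by simp [h])
        have e4 := p4 p (by simp [h])
        have i1 : (w p).imI = 0 := by simp [w, e1, e2]
        have i2 : (w p).imJ < 0 := by simp [w, e3]; positivity
        exact ⟨by simp [h, collapse, lexSign, i1, i2, not_lt.2 i2.le],
          hne (Or.inr (Or.inl i2.ne))⟩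
      · have e1 := z1 p (by simp [h])
        have e2 := z2 p (by simp [h])
        have e3 := z3 p (by simp [h])
        have e4 := z4 p (by simp [h])
        have e5 := p5 p (by simp [h])
        have e6 := z6 p (by simp [h])
        have i1 : (w p).imI = 0 := by simp [w, e1, e2]
        have i2 : (w p).imJ = 0 := by simp [w, e3, e4]
        have i3 : 0 < (w p).imK := by simp [w, e5, e6, hl]
        exact ⟨by simp [h, collapse, lexSign, i1, i2, i3], hne (Or.inr (Or.inr i3.ne'))⟩
      · have e1 := z1 p (by simp [h])
        have e2 := z2 p (by simp [h])
        have e3 := z3 p (by simp [h])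
        have e4 := z4 p (by simp [h])
        have e5 := z5 p (by simp [h])
        have e6 := p6 p (by simp [h])
        have i1 : (w p).imI = 0 := by simp [w, e1, e2]
        have i2 : (w p).imJ = 0 := by simp [w, e3, e4]
        have i3 : (w p).imK < 0 := by simp [w, e5]; positivity
        exact ⟨by simp [h, collapse, lexSign, i1, i2, not_lt.2 i3.le],
          hne (Or.inr (Or.inr i3.ne))⟩
  have hsqw : ∀ p, w p * w p = -((‖w p‖ ^ 2 : ℝ) : ℍ[ℝ]) := by
    intro p
    have hN : ‖w p‖ ^ 2 = (φ1 p - φ2 p) ^ 2 + (l p * (φ3 p - φ4 p)) ^ 2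
        + (l p * (φ5 p - φ6 p)) ^ 2 := by
      rw [sq, ← normSq_eq_norm_mul_self, normSq_def']
      simp [w]
    rw [← coe_neg]
    generalize ‖w p‖ ^ 2 = N at hN
    subst hN
    apply Quaternion.ext
    · rw [re_coe]; simp [w]; ring
    · rw [imI_coe]; simp [w]; ring
    · rw [imJ_coe]; simp [w]; ring
    · rw [imK_coe]; simp [w]; ring
  have hn : ∀ p, 0 < ‖w p‖ := fun p => norm_pos_iff.2 (hwf p).2
  refine ⟨fun p => ‖w p‖⁻¹ • w p, ?_, ?_, ?_, ?_⟩
  · exact (hw.norm.inv₀ fun p => (hn p).ne').smul hw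
  · intro p
    rw [smul_mul_smul_comm, hsqw]
    have h0 := (hn p).ne'
    have h1 : ‖w p‖⁻¹ * ‖w p‖⁻¹ * -(‖w p‖ ^ 2) = -1 := by field_simp
    rw [← coe_neg, ← coe_mul_eq_smul, ← coe_mul, h1, coe_neg, coe_one]
  · intro p
    rw [← (hwf p).1]
    simp only [collapse, imI_smul, imJ_smul, imK_smul, smul_eq_mul]
    exact lexSign_smul (inv_pos.2 (hn p)) _ _ _
  · intro p hp
    have h0 : f p = 0 := hfA p hp
    have e1 := p1 p (by simp [h0])
    have e2 := z2 p (by simp [h0])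
    have el := zl p (by simpa using hp)
    have hwp : w p = φ1 p • qi := by ext <;> simp [w, e2, el, qi]
    have hnq : ‖qi‖ = 1 := norm_of_sq qi_mul_qi
    simp only [hwp, norm_smul, hnq, smul_smul, Real.norm_eq_abs, abs_of_pos e1, mul_one,
      inv_mul_cancel₀ e1.ne', one_smul]

/-! ### Lifting deformations of unit imaginary quaternions to conjugations -/

/-- For `u, v` unit imaginary and `u + v ≠ 0`, conjugation by `rot v u` carries `u` to `v`. -/
def rot (v u : ℍ[ℝ]) : ℍ[ℝ] := (2 : ℝ)⁻¹ • (1 - v * u)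

lemma mul_rot {u v : ℍ[ℝ]} (hu : u * u = -1) (hv : v * v = -1) : v * rot v u = rot v u * u := by
  simp only [rot, mul_smul_comm, smul_mul_assoc, mul_sub, sub_mul, mul_one, one_mul]
  rw [← mul_assoc, hv, mul_assoc v u u, hu]
  congr 1
  noncomm_ring

lemma rot_ne_zero {u v : ℍ[ℝ]} (hv : v * v = -1) (h : u + v ≠ 0) : rot v u ≠ 0 := by
  intro h0
  have h1 : v * rot v u = 0 := by rw [h0, mul_zero]
  rw [rot, mul_smul_comm, mul_sub, ← mul_assoc, hv, mul_one] at h1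
  apply h
  have := (smul_eq_zero.1 h1).resolve_left (by norm_num)
  rw [← this]
  noncomm_ring

lemma rot_self {u : ℍ[ℝ]} (hu : u * u = -1) : rot u u = 1 := by
  rw [rot, hu, sub_neg_eq_add, ← two_smul ℝ (1 : ℍ[ℝ]), smul_smul]
  norm_num

lemma continuous_rot {K : Type*} [TopologicalSpace K] {u v : K → ℍ[ℝ]} (hv : Continuous v)
    (hu : Continuous u) : Continuous fun p => rot (v p) (u p) := by
  unfold rot; fun_prop

/-- A homotopy of maps to the 2-sphere of unit imaginary quaternions is covered by a family of
conjugations, trivial where the homotopy is constantly `qi`. -/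
lemma exists_conj_of_homotopy {K : Type*} [PseudoMetricSpace K] [CompactSpace K]
    {U : I × K → ℍ[ℝ]} (hU : Continuous U) (hsq : ∀ p, U p * U p = -1) :
    ∃ q : K → ℍ[ℝ], Continuous q ∧ (∀ k, q k ≠ 0) ∧ (∀ k, U (1, k) * q k = q k * U (0, k)) ∧
      ∀ k, (∀ s, U (s, k) = qi) → q k = 1 := by
  have huc := CompactSpace.uniformContinuous_of_continuous hU
  obtain ⟨δ, hδ, hd⟩ := Metric.uniformContinuous_iff.1 huc 1 one_pos
  obtain ⟨N, hN⟩ := exists_nat_one_div_lt hδ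
  let s : ℕ → I := fun n => Set.projIcc (0 : ℝ) 1 zero_le_one (n * (1 / ((N : ℝ) + 1)))
  have hs : ∀ n, dist (s n) (s (n + 1)) < δ := by
    intro n
    rw [Subtype.dist_eq, Real.dist_eq]
    refine lt_of_le_of_lt (Set.abs_projIcc_sub_projIcc _) ?_
    have : (n : ℝ) * (1 / ((N : ℝ) + 1)) - ((n + 1 : ℕ) : ℝ) * (1 / ((N : ℝ) + 1))
        = -(1 / ((N : ℝ) + 1)) := by push_cast; ring
    rw [this, abs_neg, abs_of_pos (by positivity)]
    exact hN
  have s0 : s 0 = 0 := by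
    simp only [s, Nat.cast_zero, zero_mul]
    exact Set.projIcc_left _
  have s1 : s (N + 1) = 1 := by
    have : ((N + 1 : ℕ) : ℝ) * (1 / ((N : ℝ) + 1)) = 1 := by
      push_cast; field_simp
    simp only [s, this]
    exact Set.projIcc_right _
  have key : ∀ n : ℕ, ∃ q : K → ℍ[ℝ], Continuous q ∧ (∀ k, q k ≠ 0) ∧
      (∀ k, U (s n, k) * q k = q k * U (0, k)) ∧ ∀ k, (∀ s, U (s, k) = qi) → q k = 1 := by
    intro n
    induction n with
    | zero => exact ⟨fun _ => 1, continuous_const, fun _ => one_ne_zero, by simp [s0], by simp⟩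
    | succ n ih =>
      obtain ⟨q, cq, nq, eq, oq⟩ := ih
      have hne : ∀ k, U (s n, k) + U (s (n + 1), k) ≠ 0 := by
        intro k h0
        have h1 : dist (U (s n, k)) (U (s (n + 1), k)) < 1 := hd (by
          rw [Prod.dist_eq, dist_self, max_eq_left dist_nonneg]
          exact hs n)
        have h2 : U (s (n + 1), k) = -U (s n, k) := by rw [eq_neg_iff_add_eq_zero, add_comm, h0]
        rw [h2, dist_eq_norm, sub_neg_eq_add, ← two_smul ℝ, norm_smul, norm_of_sq (hsq _)] at h1
        norm_num at h1
      refine ⟨fun k => rot (U (s (n + 1), k)) (U (s n, k)) * q k, ?_, ?_, ?_, ?_⟩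
      · exact (continuous_rot (by fun_prop) (by fun_prop)).mul cq
      · exact fun k => mul_ne_zero (rot_ne_zero (hsq _) (hne k)) (nq k)
      · intro k
        dsimp only
        rw [← mul_assoc, mul_rot (hsq _) (hsq _), mul_assoc, eq, mul_assoc]
      · intro k hk
        dsimp only
        rw [hk, hk, rot_self qi_mul_qi, oq k hk, one_mul]
  obtain ⟨q, cq, nq, eq, oq⟩ := key (N + 1)
  rw [s1] at eq
  exact ⟨q, cq, nq, eq, oq⟩

/-! ### Complex numbers inside the quaternions and continuous logarithms -/

/-- The embedding `ℂ → ℍ` sending `Complex.I` to `qi`; its image is the centralizer of `qi`. -/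
def toQ (z : ℂ) : ℍ[ℝ] := mkQ z.re z.im 0 0

lemma toQ_mul (z w : ℂ) : toQ (z * w) = toQ z * toQ w := by
  ext <;> simp [toQ]

lemma toQ_one : toQ 1 = 1 := by ext <;> simp [toQ]

lemma toQ_comm (z : ℂ) : toQ z * qi = qi * toQ z := by
  ext <;> simp [toQ, qi]

lemma toQ_ne_zero {z : ℂ} (hz : z ≠ 0) : toQ z ≠ 0 := by
  intro h
  have h1 : toQ z * toQ z⁻¹ = 1 := by rw [← toQ_mul, mul_inv_cancel₀ hz, toQ_one]
  rw [h, zero_mul] at h1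
  exact zero_ne_one h1

lemma toQ_injective : Function.Injective toQ := by
  intro z w h
  apply Complex.ext
  · exact congrArg (fun q : ℍ[ℝ] => q.re) h
  · exact congrArg (fun q : ℍ[ℝ] => q.imI) h

lemma continuous_toQ : Continuous toQ :=
  continuous_mk Complex.continuous_re Complex.continuous_im continuous_const continuous_const

/-- The complex part of a quaternion, a left inverse of `toQ`. -/
def ofQ (q : ℍ[ℝ]) : ℂ := ⟨q.re, q.imI⟩

lemma continuous_ofQ : Continuous ofQ := by
  have : ofQ = fun q => (q.re : ℂ) + q.imI * Complex.I := by
    funext q; simp [ofQ, Complex.ext_iff]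
  rw [this]
  have h1 := continuous_re
  have h2 := continuous_imI
  fun_prop

lemma toQ_ofQ {q : ℍ[ℝ]} (h : q * qi = qi * q) : toQ (ofQ q) = q := by
  have h2 := congrArg (fun q : ℍ[ℝ] => q.imJ) h
  have h3 := congrArg (fun q : ℍ[ℝ] => q.imK) h
  simp [qi] at h2 h3
  ext
  · rfl
  · rfl
  · simp [toQ]; linarith
  · simp [toQ]; linarith

lemma ofQ_toQ (z : ℂ) : ofQ (toQ z) = z := rfl

/-- Continuous logarithms on the cube, by lifting along the covering `exp` over the ambient vector
space, where simple connectedness is available. -/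
lemma exists_log {ι : Type*} [Fintype ι] {g : (ι → I) → ℂ} (hg : Continuous g)
    (h0 : ∀ p, g p ≠ 0) : ∃ Θ : (ι → I) → ℂ, Continuous Θ ∧ ∀ p, Complex.exp (Θ p) = g p := by
  let r : (ι → ℝ) → ι → I := fun p i => Set.projIcc 0 1 zero_le_one (p i)
  have hr : Continuous r := by
    refine continuous_pi fun i => continuous_projIcc.comp (continuous_apply i)
  have hexp : Complex.exp (Complex.log (g (r 0))) = g (r 0) := Complex.exp_log (h0 _)
  obtain ⟨F, ⟨-, hF⟩, -⟩ := Complex.isCoveringMapOn_exp.existsUnique_continuousMap_lifts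
    ⟨g ∘ r, hg.comp hr⟩ hexp (fun p => h0 _)
  refine ⟨fun p => F fun i => (p i : ℝ), by fun_prop, fun p => ?_⟩
  have := congrFun hF fun i => (p i : ℝ)
  simp only [Function.comp_apply, ContinuousMap.coe_mk] at this
  rw [this]
  congr 1
  funext i
  exact Set.projIcc_val _ _

/-- A continuous path of logarithms of `1` is constant. -/
lemma eq_of_exp_eq_one {D : I → ℂ} (hD : Continuous D) (h : ∀ s, Complex.exp (D s) = 1) :
    D 0 = D 1 := by
  have h1 : D = fun _ => D 0 := by
    refine Complex.isCoveringMap_exp.eq_of_comp_eq hD continuous_const ?_ 0 rfl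
    funext s
    simp [h]
  exact (congrFun h1 1).symm

/-! ### The degree of a map of the square -/

/-- `HasDegree f n`: the map `f = collapse ∘ (g qi g⁻¹)` is covered by a nowhere zero quaternionic
map `g` on the square that is `1` on three sides and has complex values of winding number `n` on
the side `p 0 = 1`. -/
def HasDegree (f : (Fin 2 → I) → Fin 6) (n : ℤ) : Prop :=
  ∃ (g : (Fin 2 → I) → ℍ[ℝ]) (θ : I → ℂ), Continuous g ∧ (∀ p, g p ≠ 0) ∧
    (∀ p, collapse (g p * qi * (g p)⁻¹) = f p) ∧
    (∀ p, p 0 = 0 ∨ p 1 = 0 ∨ p 1 = 1 → g p = 1) ∧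
    Continuous θ ∧ θ 0 = 0 ∧ θ 1 = n * (2 * Real.pi * Complex.I) ∧
    ∀ p, p 0 = 1 → g p = toQ (Complex.exp (θ (p 1)))

lemma conj_eq {u g : ℍ[ℝ]} (hg : g ≠ 0) (h : u * g = g * qi) : g * qi * g⁻¹ = u := by
  rw [← h, mul_assoc, mul_inv_cancel₀ hg, mul_one]

lemma conj_sq {g : ℍ[ℝ]} (hg : g ≠ 0) : g * qi * g⁻¹ * (g * qi * g⁻¹) = -1 := by
  calc g * qi * g⁻¹ * (g * qi * g⁻¹) = g * qi * (g⁻¹ * g) * qi * g⁻¹ := by noncomm_ring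
    _ = g * (qi * qi) * g⁻¹ := by rw [inv_mul_cancel₀ hg]; noncomm_ring
    _ = -1 := by rw [qi_mul_qi, mul_neg_one, neg_mul, mul_inv_cancel₀ hg]

lemma conj_mul {g : ℍ[ℝ]} (hg : g ≠ 0) : g * qi * g⁻¹ * g = g * qi := by
  rw [mul_assoc, inv_mul_cancel₀ hg, mul_one]

lemma conj_toQ {z : ℂ} (hz : z ≠ 0) : toQ z * qi * (toQ z)⁻¹ = qi :=
  conj_eq (toQ_ne_zero hz) (toQ_comm z).symm

lemma mem_boundary_iff {p : Fin 2 → I} :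
    p ∈ Cube.boundary (Fin 2) ↔ (p 0 = 0 ∨ p 1 = 0 ∨ p 1 = 1) ∨ p 0 = 1 := by
  change (∃ i, p i = 0 ∨ p i = 1) ↔ _
  rw [Fin.exists_fin_two]
  tauto

lemma isClosed_boundary : IsClosed (Cube.boundary (Fin 2)) := by
  have h : ∀ (i : Fin 2) (a : I), IsClosed {p : Fin 2 → I | p i = a} := fun i a =>
    isClosed_eq (continuous_apply i) continuous_const
  convert (((h 0 0).union ((h 1 0).union (h 1 1))).union (h 0 1)) using 1
  ext p
  exact mem_boundary_iff

lemma continuous_vec {K : Type*} [TopologicalSpace K] {x y : K → I} (hx : Continuous x)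
    (hy : Continuous y) : Continuous fun k => (![x k, y k] : Fin 2 → I) :=
  continuous_pi fun i => by fin_cases i <;> simpa

/-- Lift `f` to the sphere as `u`; the homotopy `s ↦ u (s * p 0, p 1)` starts at the constant `qi`,
so it is covered by conjugations, and these provide `g`. -/
lemma exists_hasDegree {f : (Fin 2 → I) → Fin 6} (hf : @Continuous (Fin 2 → I) SpherePoset _ _ f)
    (hb : ∀ p ∈ Cube.boundary (Fin 2), f p = 0) : ∃ n, HasDegree f n := by
  obtain ⟨u, cu, su, eu, bu⟩ := exists_sphere_lift hf isClosed_boundary hb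
  have cU : Continuous fun a : I × (Fin 2 → I) => u ![a.1 * a.2 0, a.2 1] :=
    cu.comp (continuous_vec (by fun_prop) (by fun_prop))
  obtain ⟨g, cg, ng, eg, og⟩ := exists_conj_of_homotopy cU fun _ => su _
  have e1 : ∀ p : Fin 2 → I, u ![1 * p 0, p 1] = u p := fun p => by
    congr 1; funext i; fin_cases i <;> simp
  have e0 : ∀ p : Fin 2 → I, u ![0 * p 0, p 1] = qi := fun p =>
    bu _ (mem_boundary_iff.2 (by simp))
  simp only [e1, e0] at eg
  have hJ : ∀ p : Fin 2 → I, p 0 = 0 ∨ p 1 = 0 ∨ p 1 = 1 → g p = 1 := by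
    intro p hp
    refine og p fun s => bu _ (mem_boundary_iff.2 (Or.inl ?_))
    rcases hp with h | h | h <;> simp [h]
  have hcomm : ∀ p : Fin 2 → I, p 0 = 1 → g p * qi = qi * g p := by
    intro p hp
    rw [← eg, bu p (mem_boundary_iff.2 (Or.inr hp))]
  have hne : ∀ y : I, ofQ (g ![1, y]) ≠ 0 := by
    intro y h0
    have h1 := toQ_ofQ (hcomm ![1, y] rfl)
    rw [h0] at h1
    exact ng _ (h1.symm.trans (by ext <;> simp [toQ]))
  obtain ⟨L, cL, eL⟩ := exists_log (ι := Unit) (g := fun p => ofQ (g ![1, p ()]))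
    (continuous_ofQ.comp (cg.comp (continuous_vec continuous_const (by fun_prop))))
    (fun p => hne _)
  have eL' : ∀ y : I, Complex.exp (L fun _ => y) = ofQ (g ![1, y]) := fun y => eL _
  have hg0 : ofQ (g ![1, 0]) = 1 := by
    rw [hJ _ (by simp), ← toQ_one, ofQ_toQ]
  have hg1 : ofQ (g ![1, 1]) = 1 := by
    rw [hJ _ (by simp), ← toQ_one, ofQ_toQ]
  obtain ⟨n, hn⟩ := Complex.exp_eq_one_iff.1
    (show Complex.exp ((L fun _ => 1) - L fun _ => 0) = 1 by
      rw [Complex.exp_sub, eL', eL', hg0, hg1, div_one])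
  refine ⟨n, g, fun y => (L fun _ => y) - L fun _ => 0, cg, ng, ?_, hJ, by fun_prop,
    sub_self _, hn, ?_⟩
  · intro p
    rw [conj_eq (ng p) (eg p), eu]
  · intro p hp
    rw [Complex.exp_sub, eL', eL', hg0, div_one]
    have : (![1, p 1] : Fin 2 → I) = p := by
      funext i; fin_cases i <;> simp [hp]
    rw [this, toQ_ofQ (hcomm p hp)]

lemma lexSign_ne_neg {a b c : ℝ} (hz : a = 0 → b = 0 → c ≠ 0) :
    lexSign a b c ≠ lexSign (-a) (-b) (-c) := by
  intro h
  unfold lexSign at h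
  rcases lt_trichotomy a 0 with ha | rfl | ha
  · simp [ha, not_lt.2 ha.le] at h
  · rcases lt_trichotomy b 0 with hb | rfl | hb
    · simp [hb, not_lt.2 hb.le] at h
    · rcases lt_or_gt_of_ne (hz rfl rfl) with hc | hc
      · simp [hc, not_lt.2 hc.le] at h
      · simp [hc, not_lt.2 hc.le] at h
    · simp [hb, not_lt.2 hb.le] at h
  · simp [ha, not_lt.2 ha.le] at h

lemma add_ne_zero_of_collapse_eq {u v : ℍ[ℝ]} (hu : u * u = -1) (h : collapse u = collapse v) :
    u + v ≠ 0 := by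
  intro h0
  have hv : v = -u := by rw [eq_neg_iff_add_eq_zero, add_comm, h0]
  rw [hv] at h
  exact lexSign_ne_neg (im_ne_zero_of_sq hu) h

/-- Homotopy invariance of the degree (in particular its uniqueness). Covering the homotopy by
conjugations turns the two quaternionic maps into lifts of one map to the sphere; they then differ
by a complex-valued map on the square, whose logarithm compares the two winding numbers. -/
lemma HasDegree.unique {F : I × (Fin 2 → I) → Fin 6}
    (hF : @Continuous (I × (Fin 2 → I)) SpherePoset _ _ F)
    (hb : ∀ t, ∀ p ∈ Cube.boundary (Fin 2), F (t, p) = 0) {n n' : ℤ}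
    (h : HasDegree (fun p => F (0, p)) n) (h' : HasDegree (fun p => F (1, p)) n') : n = n' := by
  obtain ⟨g, θ, cg, ng, eg, og, cθ, θ0, θ1, hθ⟩ := h
  obtain ⟨g', θ', cg', ng', eg', og', cθ', θ0', θ1', hθ'⟩ := h'
  obtain ⟨U, cU, sU, eU, bU⟩ := exists_sphere_lift hF
    (A := {a | a.2 ∈ Cube.boundary (Fin 2)}) (isClosed_boundary.preimage continuous_snd)
    (fun a ha => hb a.1 a.2 ha)
  obtain ⟨q, cq, nq, eq, oq⟩ := exists_conj_of_homotopy cU sU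
  have hconj : ∀ p ∈ Cube.boundary (Fin 2), g p * qi * (g p)⁻¹ = qi := by
    intro p hp
    rcases mem_boundary_iff.1 hp with h | h
    · rw [og p h]; simp
    · rw [hθ p h, conj_toQ (Complex.exp_ne_zero _)]
  have hconj' : ∀ p ∈ Cube.boundary (Fin 2), g' p * qi * (g' p)⁻¹ = qi := by
    intro p hp
    rcases mem_boundary_iff.1 hp with h | h
    · rw [og' p h]; simp
    · rw [hθ' p h, conj_toQ (Complex.exp_ne_zero _)]
  let u : (Fin 2 → I) → ℍ[ℝ] := fun p => g p * qi * (g p)⁻¹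
  let u' : (Fin 2 → I) → ℍ[ℝ] := fun p => g' p * qi * (g' p)⁻¹
  have cu : Continuous u := (cg.mul continuous_const).mul (cg.inv₀ ng)
  have cu' : Continuous u' := (cg'.mul continuous_const).mul (cg'.inv₀ ng')
  have su : ∀ p, u p * u p = -1 := fun p => conj_sq (ng p)
  have su' : ∀ p, u' p * u' p = -1 := fun p => conj_sq (ng' p)
  let Q : (Fin 2 → I) → ℍ[ℝ] := fun p => rot (u' p) (U (1, p)) * q p * rot (U (0, p)) (u p)
  have cQ : Continuous Q := ((continuous_rot cu' (by fun_prop)).mul cq).mul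
    (continuous_rot (by fun_prop) cu)
  have nQ : ∀ p, Q p ≠ 0 := fun p => mul_ne_zero (mul_ne_zero
    (rot_ne_zero (su' p) (add_ne_zero_of_collapse_eq (sU _) (by rw [eU, eg']))) (nq p))
    (rot_ne_zero (sU _) (add_ne_zero_of_collapse_eq (su p) (by rw [eU, eg])))
  have eQ : ∀ p, u' p * Q p = Q p * u p := by
    intro p
    calc u' p * Q p = (u' p * rot (u' p) (U (1, p))) * q p * rot (U (0, p)) (u p) := by
          simp only [Q, mul_assoc]
      _ = rot (u' p) (U (1, p)) * (U (1, p) * q p) * rot (U (0, p)) (u p) := by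
          rw [mul_rot (sU _) (su' p)]; simp only [mul_assoc]
      _ = rot (u' p) (U (1, p)) * q p * (U (0, p) * rot (U (0, p)) (u p)) := by
          rw [eq]; simp only [mul_assoc]
      _ = Q p * u p := by rw [mul_rot (su p) (sU _)]; simp only [Q, mul_assoc]
  have oQ : ∀ p ∈ Cube.boundary (Fin 2), Q p = 1 := by
    intro p hp
    have hU : ∀ s, U (s, p) = qi := fun s => bU _ hp
    simp only [Q, u, u', hconj p hp, hconj' p hp, hU, rot_self qi_mul_qi, oq p hU, mul_one]
  -- `g'` and `Q * g` cover the same map to the sphere, so they differ by a complex factor.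
  let c : (Fin 2 → I) → ℍ[ℝ] := fun p => (Q p * g p)⁻¹ * g' p
  have nG : ∀ p, Q p * g p ≠ 0 := fun p => mul_ne_zero (nQ p) (ng p)
  have cc : Continuous c := ((cQ.mul cg).inv₀ nG).mul cg'
  have nc : ∀ p, c p ≠ 0 := fun p => mul_ne_zero (inv_ne_zero (nG p)) (ng' p)
  have comm : ∀ p, c p * qi = qi * c p := by
    intro p
    apply mul_left_cancel₀ (nG p)
    have h1 : (Q p * g p) * c p = g' p := by
      simp only [c]; rw [← mul_assoc, mul_inv_cancel₀ (nG p), one_mul]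
    have h2 : u' p * (Q p * g p) = (Q p * g p) * qi := by
      have h3 : u p * g p = g p * qi := conj_mul (ng p)
      rw [← mul_assoc (u' p), eQ, mul_assoc (Q p), h3, mul_assoc (Q p)]
    calc (Q p * g p) * (c p * qi) = g' p * qi := by rw [← mul_assoc, h1]
      _ = u' p * g' p := (conj_mul (ng' p)).symm
      _ = u' p * (Q p * g p) * c p := by rw [mul_assoc (u' p), h1]
      _ = Q p * g p * (qi * c p) := by rw [h2, mul_assoc]
  have tc : ∀ p, toQ (ofQ (c p)) = c p := fun p => toQ_ofQ (comm p)
  obtain ⟨Θ, cΘ, eΘ⟩ := exists_log (continuous_ofQ.comp cc) (fun p h0 => nc p (by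
    rw [← tc p]; dsimp at h0; rw [h0]; ext <;> simp [toQ]))
  simp only [Function.comp_apply] at eΘ
  have hJ : ∀ p : Fin 2 → I, p 0 = 0 ∨ p 1 = 0 ∨ p 1 = 1 → Complex.exp (Θ p) = 1 := by
    intro p hp
    rw [eΘ]
    simp only [c]
    rw [oQ p (mem_boundary_iff.2 (Or.inl hp)), og p hp, og' p hp]
    simp only [mul_one, inv_one]
    rw [← toQ_one, ofQ_toQ]
  have hR : ∀ y : I, Complex.exp (Θ ![1, y]) = Complex.exp (θ' y - θ y) := by
    intro y
    apply toQ_injective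
    rw [eΘ, tc]
    apply mul_left_cancel₀ (nG ![1, y])
    simp only [c]
    rw [← mul_assoc, mul_inv_cancel₀ (nG _), one_mul, oQ _ (mem_boundary_iff.2 (by simp)), one_mul,
      hθ _ rfl, hθ' _ rfl, ← toQ_mul, ← Complex.exp_add]
    simp
  have hA := eq_of_exp_eq_one (D := fun y => Θ ![1, y] - (θ' y - θ y))
    ((cΘ.comp (continuous_vec continuous_const continuous_id)).sub (cθ'.sub cθ)) (fun y => by
      rw [Complex.exp_sub, hR, div_self (Complex.exp_ne_zero _)])
  have hB := eq_of_exp_eq_one (D := fun y => Θ ![0, y])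
    (cΘ.comp (continuous_vec continuous_const continuous_id)) (fun y => hJ _ (by simp))
  have hC := eq_of_exp_eq_one (D := fun x => Θ ![x, 0])
    (cΘ.comp (continuous_vec continuous_id continuous_const)) (fun y => hJ _ (by simp))
  have hD := eq_of_exp_eq_one (D := fun x => Θ ![x, 1])
    (cΘ.comp (continuous_vec continuous_id continuous_const)) (fun y => hJ _ (by simp))
  simp only [θ0, θ0', θ1, θ1', sub_zero] at hA hB hC hD
  have hz : ((n' : ℂ) - n) * (2 * Real.pi * Complex.I) = 0 := by
    linear_combination hA - hB + hC - hD
  rcases mul_eq_zero.1 hz with h | h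
  · have := sub_eq_zero.1 h
    exact_mod_cast this.symm
  · exact absurd h Complex.two_pi_I_ne_zero

lemma collapse_qi : collapse qi = 0 := by simp [collapse, lexSign, qi]

/-- The degree is additive under concatenation in the second coordinate; the formula is that of
`GenLoop.transAt 1`. -/
lemma HasDegree.concat {f f' : (Fin 2 → I) → Fin 6} {n n' : ℤ} (h : HasDegree f n)
    (h' : HasDegree f' n') : HasDegree (fun t => if (t 1 : ℝ) ≤ 1 / 2
      then f (Function.update t 1 <| Set.projIcc 0 1 zero_le_one (2 * t 1))
      else f' (Function.update t 1 <| Set.projIcc 0 1 zero_le_one (2 * t 1 - 1))) (n + n') := by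
  obtain ⟨g, θ, cg, ng, eg, og, cθ, θ0, θ1, hθ⟩ := h
  obtain ⟨g', θ', cg', ng', eg', og', cθ', θ0', θ1', hθ'⟩ := h'
  have hexp : Complex.exp (θ 1) = 1 := by
    rw [θ1]; exact Complex.exp_int_mul_two_pi_mul_I n
  have P1 : Set.projIcc (0 : ℝ) 1 zero_le_one (2 * (1 / 2)) = 1 := by norm_num
  have P0 : Set.projIcc (0 : ℝ) 1 zero_le_one (2 * (1 / 2) - 1) = 0 := by norm_num
  refine ⟨fun t => if (t 1 : ℝ) ≤ 1 / 2
      then g (Function.update t 1 <| Set.projIcc 0 1 zero_le_one (2 * t 1))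
      else g' (Function.update t 1 <| Set.projIcc 0 1 zero_le_one (2 * t 1 - 1)),
    fun y => if (y : ℝ) ≤ 1 / 2 then θ (Set.projIcc 0 1 zero_le_one (2 * y))
      else θ 1 + θ' (Set.projIcc 0 1 zero_le_one (2 * y - 1)), ?_, ?_, ?_, ?_, ?_, ?_, ?_, ?_⟩
  · refine Continuous.if_le ?_ ?_ (by fun_prop) continuous_const ?_
    · exact cg.comp (continuous_id.update 1 (continuous_projIcc.comp (by fun_prop)))
    · exact cg'.comp (continuous_id.update 1 (continuous_projIcc.comp (by fun_prop)))
    · intro t ht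
      rw [ht, P1, P0, og _ (by simp), og' _ (by simp)]
  · intro t; dsimp only; split_ifs
    exacts [ng _, ng' _]
  · intro t; dsimp only; split_ifs
    exacts [eg _, eg' _]
  · intro t ht; dsimp only
    split_ifs with hle
    · apply og
      rcases ht with h | h | h
      · simp [h]
      · simp [h]
      · rw [h] at hle; norm_num at hle
    · apply og'
      rcases ht with h | h | h
      · simp [h]
      · rw [h] at hle; norm_num at hle
      · right; right; rw [h]; norm_num
  · refine Continuous.if_le ?_ ?_ (by fun_prop) continuous_const ?_
    · exact cθ.comp (continuous_projIcc.comp (by fun_prop))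
    · exact continuous_const.add (cθ'.comp (continuous_projIcc.comp (by fun_prop)))
    · intro t ht
      rw [ht, P1, P0, θ0', add_zero]
  · simp [θ0]
  · have h1 : ¬ ((1 : I) : ℝ) ≤ 1 / 2 := by norm_num
    have h2 : Set.projIcc (0 : ℝ) 1 zero_le_one (2 * ((1 : I) : ℝ) - 1) = 1 := by norm_num
    simp only [h1, if_false, h2, θ1, θ1']
    push_cast; ring
  · intro p hp; dsimp only
    split_ifs
    · rw [hθ _ (by simpa using hp)]; simp
    · rw [hθ' _ (by simpa using hp), Complex.exp_add, hexp]; simp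

lemma exists_of_degree (n : ℤ) :
    ∃ f : GenLoop (Fin 2) SpherePoset SpherePoset.x₁, HasDegree (fun p => f p) n := by
  let θ : I → ℂ := fun y => y * (n * (2 * Real.pi * Complex.I))
  have cθ : Continuous θ := by fun_prop
  -- The `j`-component keeps `g` away from `0` inside the square and vanishes on its boundary.
  let g : (Fin 2 → I) → ℍ[ℝ] := fun p =>
    toQ ((1 - (p 0 : ℝ) : ℝ) + (p 0 : ℝ) * Complex.exp (θ (p 1))) +
      mkQ 0 0 ((p 0 : ℝ) * (1 - p 0) * ((p 1 : ℝ) * (1 - p 1))) 0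
  have cg : Continuous g := by
    refine (continuous_toQ.comp (by fun_prop)).add
      (continuous_mk continuous_const continuous_const (by fun_prop) continuous_const)
  have E0 : Complex.exp (θ 0) = 1 := by simp [θ]
  have E1 : Complex.exp (θ 1) = 1 := by
    have : θ 1 = n * (2 * Real.pi * Complex.I) := by simp [θ]
    rw [this]; exact Complex.exp_int_mul_two_pi_mul_I n
  have z0 : mkQ 0 0 0 0 = 0 := by ext <;> simp
  have gJ : ∀ p, p 0 = 0 ∨ p 1 = 0 ∨ p 1 = 1 → g p = 1 := by
    rintro p (h | h | h) <;> simp [g, h, E0, E1, z0, toQ_one]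
  have gR : ∀ p, p 0 = 1 → g p = toQ (Complex.exp (θ (p 1))) := by
    intro p h; simp [g, h, z0]
  have ng : ∀ p, g p ≠ 0 := by
    intro p
    by_cases h : p ∈ Cube.boundary (Fin 2)
    · rcases mem_boundary_iff.1 h with h | h
      · rw [gJ p h]; exact one_ne_zero
      · rw [gR p h]; exact toQ_ne_zero (Complex.exp_ne_zero _)
    · rw [mem_boundary_iff] at h
      push Not at h
      obtain ⟨⟨h1, h2, h3⟩, h4⟩ := h
      have hx : 0 < (p 0 : ℝ) := unitInterval.pos_iff_ne_zero.2 h1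
      have hx' : (p 0 : ℝ) < 1 := unitInterval.lt_one_iff_ne_one.2 h4
      have hy : 0 < (p 1 : ℝ) := unitInterval.pos_iff_ne_zero.2 h2
      have hy' : (p 1 : ℝ) < 1 := unitInterval.lt_one_iff_ne_one.2 h3
      intro h0
      have := congrArg (fun q : ℍ[ℝ] => q.imJ) h0
      simp only [g, toQ, imJ_add, mkQ_imJ, zero_add, imJ_zero] at this
      have hpos : 0 < (p 0 : ℝ) * (1 - p 0) * ((p 1 : ℝ) * (1 - p 1)) :=
        mul_pos (mul_pos hx (by linarith)) (mul_pos hy (by linarith))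
      linarith
  have cf := continuous_collapse ((cg.mul continuous_const).mul (cg.inv₀ ng))
    (fun p => conj_sq (ng p))
  refine ⟨⟨⟨fun p => collapse (g p * qi * (g p)⁻¹), cf⟩, ?_⟩, g, θ, cg, ng, fun p => rfl, gJ, cθ,
    by simp [θ], by simp [θ], gR⟩
  intro p hp
  change collapse (g p * qi * (g p)⁻¹) = (0 : Fin 6)
  rw [← collapse_qi]
  congr 1
  rcases mem_boundary_iff.1 hp with h | h
  · rw [gJ p h]; simp
  · rw [gR p h, conj_toQ (Complex.exp_ne_zero _)]

/-! ### Maps of degree zero are null-homotopic -/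

lemma collapse_conj_of_near_one {q : ℍ[ℝ]} (h : ‖q - 1‖ < 1 / 2) :
    q ≠ 0 ∧ collapse (q * qi * q⁻¹) = 0 := by
  have hq : q ≠ 0 := by
    rintro rfl; norm_num at h
  refine ⟨hq, ?_⟩
  have hn : normSq (q - 1) < 1 / 4 := by
    rw [normSq_eq_norm_mul_self]; nlinarith [norm_nonneg (q - 1)]
  rw [normSq_def'] at hn
  simp only [re_sub, imI_sub, imJ_sub, imK_sub, re_one, imI_one, imJ_one, imK_one, sub_zero] at hn
  have hN : 0 < normSq q := by
    rw [normSq_eq_norm_mul_self]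
    have := norm_pos_iff.2 hq
    positivity
  have key : 0 < (q * qi * q⁻¹).imI := by
    rw [inv_def, mul_smul_comm, imI_smul, smul_eq_mul]
    refine mul_pos (inv_pos.2 hN) ?_
    simp [qi]
    nlinarith [sq_nonneg (q.re - 1), sq_nonneg q.imI, sq_nonneg q.imJ, sq_nonneg q.imK]
  rw [collapse, lexSign, if_pos key]

/-- The loop in the sphere poset covered by a nowhere zero quaternionic map that is close to `1`
on the boundary of the square. -/
def loopOf (a : (Fin 2 → I) → ℍ[ℝ]) (ca : Continuous a) (na : ∀ p, a p ≠ 0)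
    (ba : ∀ p ∈ Cube.boundary (Fin 2), ‖a p - 1‖ < 1 / 2) :
    GenLoop (Fin 2) SpherePoset SpherePoset.x₁ :=
  ⟨⟨fun p => collapse (a p * qi * (a p)⁻¹),
    continuous_collapse ((ca.mul continuous_const).mul (ca.inv₀ na)) fun p => conj_sq (na p)⟩,
    fun p hp => (collapse_conj_of_near_one (ba p hp)).2⟩

lemma loopOf_homotopic {a b : (Fin 2 → I) → ℍ[ℝ]} (ca : Continuous a) (na : ∀ p, a p ≠ 0)
    (ba : ∀ p ∈ Cube.boundary (Fin 2), ‖a p - 1‖ < 1 / 2) (cb : Continuous b)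
    (nb : ∀ p, b p ≠ 0) (bb : ∀ p ∈ Cube.boundary (Fin 2), ‖b p - 1‖ < 1 / 2)
    (hab : ∀ (s : I) p, (1 - (s : ℝ)) • a p + (s : ℝ) • b p ≠ 0) :
    GenLoop.Homotopic (loopOf a ca na ba) (loopOf b cb nb bb) := by
  let G : I × (Fin 2 → I) → ℍ[ℝ] := fun w => (1 - (w.1 : ℝ)) • a w.2 + (w.1 : ℝ) • b w.2
  have cG : Continuous G := by fun_prop
  have nG : ∀ w, G w ≠ 0 := fun w => hab w.1 w.2
  have bG : ∀ s, ∀ p ∈ Cube.boundary (Fin 2), ‖G (s, p) - 1‖ < 1 / 2 := by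
    intro s p hp
    have h1 : a p ∈ Metric.ball (1 : ℍ[ℝ]) (1 / 2) := by
      rw [mem_ball_iff_norm]; exact ba p hp
    have h2 : b p ∈ Metric.ball (1 : ℍ[ℝ]) (1 / 2) := by
      rw [mem_ball_iff_norm]; exact bb p hp
    have h3 := (convex_ball (1 : ℍ[ℝ]) (1 / 2)) h1 h2 (a := 1 - (s : ℝ)) (b := s)
      (by linarith [s.2.2]) s.2.1 (by ring)
    rwa [mem_ball_iff_norm] at h3
  have hc := continuous_collapse ((cG.mul continuous_const).mul (cG.inv₀ nG))
    fun w => conj_sq (nG w)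
  refine ⟨⟨⟨⟨fun w => collapse (G w * qi * (G w)⁻¹), hc⟩, ?_, ?_⟩, ?_⟩⟩
  · intro p
    change collapse (G (0, p) * qi * (G (0, p))⁻¹) = collapse (a p * qi * (a p)⁻¹)
    simp [G]
  · intro p
    change collapse (G (1, p) * qi * (G (1, p))⁻¹) = collapse (b p * qi * (b p)⁻¹)
    simp [G]
  · intro s p hp
    change collapse (G (s, p) * qi * (G (s, p))⁻¹) = collapse (a p * qi * (a p)⁻¹)
    rw [(collapse_conj_of_near_one (bG s p hp)).2, (collapse_conj_of_near_one (ba p hp)).2]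

/-- A nowhere zero quaternionic map on the square equal to `1` on the boundary contracts: after a
`C¹` approximation `h`, the cone over its image has dimension at most three, so some constant close
to `1` is joined to `h` by segments that miss `0`. -/
lemma loopOf_homotopic_const {a : (Fin 2 → I) → ℍ[ℝ]} (ca : Continuous a) (na : ∀ p, a p ≠ 0)
    (ba : ∀ p ∈ Cube.boundary (Fin 2), ‖a p - 1‖ < 1 / 2)
    (oa : ∀ p ∈ Cube.boundary (Fin 2), a p = 1) :
    GenLoop.Homotopic (loopOf a ca na ba) GenLoop.const := by
  let r : (Fin 2 → ℝ) → Fin 2 → I := fun p i => Set.projIcc 0 1 zero_le_one (p i)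
  have hr : Continuous r :=
    continuous_pi fun i => continuous_projIcc.comp (continuous_apply i)
  have car : Continuous fun p => a (r p) := ca.comp hr
  obtain ⟨h, hh, hd, -⟩ := car.exists_contDiff_approx 1 (ε := fun p => min ‖a (r p)‖ (1 / 2))
    (by fun_prop) (fun p => lt_min (norm_pos_iff.2 (na _)) (by norm_num))
  let ι : (Fin 2 → I) → Fin 2 → ℝ := fun p i => (p i : ℝ)
  have rι : ∀ p, r (ι p) = p := fun p => funext fun i => Set.projIcc_val _ _
  have cι : Continuous ι := by fun_prop
  have hd' : ∀ p, ‖h (ι p) - a p‖ < min ‖a p‖ (1 / 2) := by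
    intro p
    have := hd (ι p)
    rwa [rι, dist_eq_norm] at this
  have hseg : ∀ (s : I) p, (1 - (s : ℝ)) • a p + (s : ℝ) • h (ι p) ≠ 0 := by
    intro s p h0
    have h1 : a p = -((s : ℝ) • (h (ι p) - a p)) := by
      rw [eq_neg_iff_add_eq_zero, ← h0]; module
    have h2 : ‖a p‖ ≤ ‖h (ι p) - a p‖ := by
      calc ‖a p‖ = |(s : ℝ)| * ‖h (ι p) - a p‖ := by
            conv_lhs => rw [h1, norm_neg, norm_smul, Real.norm_eq_abs]
        _ ≤ 1 * ‖h (ι p) - a p‖ := by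
            gcongr
            rw [abs_of_nonneg s.2.1]; exact s.2.2
        _ = _ := one_mul _
    exact absurd ((hd' p).trans_le (min_le_left _ _)) (not_lt.2 h2)
  have ch : Continuous fun p => h (ι p) := hh.continuous.comp cι
  have nh : ∀ p, h (ι p) ≠ 0 := fun p => by simpa using hseg 1 p
  have bh : ∀ p ∈ Cube.boundary (Fin 2), ‖h (ι p) - 1‖ < 1 / 2 := fun p hp => by
    have := (hd' p).trans_le (min_le_right _ _)
    rwa [oa p hp] at this
  have hcone : ContDiff ℝ 1 fun w : ℝ × (Fin 2 → ℝ) => w.1 • h w.2 :=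
    contDiff_fst.smul (hh.comp contDiff_snd)
  have hdense := hcone.dense_compl_range_of_finrank_lt_finrank (by
    rw [Quaternion.finrank_eq_four]; simp)
  obtain ⟨c, hc1, hc2⟩ := hdense.exists_dist_lt 1 (show (0 : ℝ) < 1 / 2 by norm_num)
  have hc : ‖c - 1‖ < 1 / 2 := by rwa [dist_comm, dist_eq_norm] at hc2
  have nc := (collapse_conj_of_near_one hc).1
  have hseg' : ∀ (s : I) p, (1 - (s : ℝ)) • h (ι p) + (s : ℝ) • c ≠ 0 := by
    intro s p h0
    rcases eq_or_ne (s : ℝ) 0 with hs | hs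
    · rw [hs] at h0
      exact nh p (by simpa using h0)
    · refine hc1 ⟨(-((s : ℝ)⁻¹ * (1 - s)), ι p), ?_⟩
      have h1 : (s : ℝ) • c = -((1 - (s : ℝ)) • h (ι p)) := by
        rw [eq_neg_iff_add_eq_zero, add_comm, h0]
      have h2 : c = (s : ℝ)⁻¹ • ((s : ℝ) • c) := by rw [smul_smul, inv_mul_cancel₀ hs, one_smul]
      rw [h2, h1]
      module
  have H1 := loopOf_homotopic ca na ba ch nh bh hseg
  have H2 := loopOf_homotopic ch nh bh continuous_const (fun _ => nc) (fun _ _ => hc) hseg'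
  have e : loopOf (fun _ => c) continuous_const (fun _ => nc) (fun _ _ => hc) = GenLoop.const := by
    ext p
    exact (collapse_conj_of_near_one hc).2
  rw [e] at H2
  exact H1.trans H2

/-- When the winding number vanishes, `g` can be multiplied on the right by a complex-valued map,
without changing `g qi g⁻¹`, so as to become `1` on the whole boundary. -/
lemma homotopic_const_of_hasDegree_zero {f : GenLoop (Fin 2) SpherePoset SpherePoset.x₁}
    (h : HasDegree (fun p => f p) 0) : GenLoop.Homotopic f GenLoop.const := by
  obtain ⟨g, θ, cg, ng, eg, og, cθ, θ0, θ1, hθ⟩ := h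
  rw [Int.cast_zero, zero_mul] at θ1
  let z : (Fin 2 → I) → ℂ := fun p => Complex.exp (-((p 0 : ℝ) * θ (p 1)))
  have cz : Continuous z := by fun_prop
  have nz : ∀ p, toQ (z p) ≠ 0 := fun p => toQ_ne_zero (Complex.exp_ne_zero _)
  let a : (Fin 2 → I) → ℍ[ℝ] := fun p => g p * toQ (z p)
  have ca : Continuous a := cg.mul (continuous_toQ.comp cz)
  have na : ∀ p, a p ≠ 0 := fun p => mul_ne_zero (ng p) (nz p)
  have oa : ∀ p ∈ Cube.boundary (Fin 2), a p = 1 := by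
    intro p hp
    rcases mem_boundary_iff.1 hp with h | h
    · have hz : z p = 1 := by
        rcases h with h | h | h <;> simp [z, h, θ0, θ1]
      simp only [a]
      rw [og p h, hz, toQ_one, one_mul]
    · simp only [a, z]
      rw [hθ p h, ← toQ_mul, ← Complex.exp_add, h]
      simp [toQ_one]
  have ba : ∀ p ∈ Cube.boundary (Fin 2), ‖a p - 1‖ < 1 / 2 := fun p hp => by
    rw [oa p hp]; norm_num
  have e : loopOf a ca na ba = f := by
    ext p
    refine (congrArg collapse (conj_eq (na p) ?_)).trans (eg p)
    simp only [a]
    rw [← mul_assoc, conj_mul (ng p), mul_assoc, mul_assoc, toQ_comm]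
  rw [← e]
  exact loopOf_homotopic_const ca na ba oa

/-! ### The degree isomorphism -/

lemma exists_degree (f : GenLoop (Fin 2) SpherePoset SpherePoset.x₁) :
    ∃ n, HasDegree (fun p => f p) n :=
  exists_hasDegree f.1.continuous fun p hp => f.2 p hp

lemma degree_eq_of_homotopic {f f' : GenLoop (Fin 2) SpherePoset SpherePoset.x₁}
    (H : GenLoop.Homotopic f f') {n n' : ℤ} (h : HasDegree (fun p => f p) n)
    (hfd : HasDegree (fun p => f' p) n') : n = n' := by
  obtain ⟨F⟩ := H
  refine HasDegree.unique (F := fun w => F w) (map_continuous F.toHomotopy)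
    (fun t p hp => (F.eq_fst t hp).trans (f.2 p hp)) ?_ ?_
  · exact (congrArg (HasDegree · n) (funext fun p => F.map_zero_left p)).mpr h
  · exact (congrArg (HasDegree · n') (funext fun p => F.map_one_left p)).mpr hfd

/-- The degree of a homotopy class. -/
def degree : HomotopyGroup (Fin 2) SpherePoset SpherePoset.x₁ → ℤ :=
  Quotient.lift (fun f => (exists_degree f).choose) fun f f' H =>
    degree_eq_of_homotopic H (exists_degree f).choose_spec (exists_degree f').choose_spec

lemma degree_eq {f : GenLoop (Fin 2) SpherePoset SpherePoset.x₁} {n : ℤ}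
    (h : HasDegree (fun p => f p) n) :
    degree (Quotient.mk (GenLoop.Homotopic.setoid (Fin 2) SpherePoset.x₁) f) = n :=
  degree_eq_of_homotopic (GenLoop.Homotopic.refl f) (exists_degree f).choose_spec h

/-- The degree as a homomorphism. -/
def degreeHom : HomotopyGroup (Fin 2) SpherePoset SpherePoset.x₁ →* Multiplicative ℤ :=
  MonoidHom.mk' (fun a => Multiplicative.ofAdd (degree a)) fun a b => by
    induction a using Quotient.inductionOn with | _ f
    induction b using Quotient.inductionOn with | _ f'
    obtain ⟨n, h⟩ := exists_degree f
    obtain ⟨n', h'⟩ := exists_degree f'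
    have hm := HomotopyGroup.mul_spec (i := (1 : Fin 2)) (p := f) (q := f')
    dsimp only at hm
    rw [hm, degree_eq h, degree_eq h', ← ofAdd_add, add_comm n n']
    exact congrArg _ (degree_eq (h'.concat h))

lemma degreeHom_injective : Function.Injective degreeHom := by
  rw [injective_iff_map_eq_one]
  intro a ha
  induction a using Quotient.inductionOn with | _ f
  obtain ⟨n, h⟩ := exists_degree f
  have hn : n = 0 := (degree_eq h).symm.trans (Multiplicative.ofAdd.injective ha)
  subst hn
  exact Quotient.sound (homotopic_const_of_hasDegree_zero h)

lemma degreeHom_surjective : Function.Surjective degreeHom := by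
  intro m
  obtain ⟨f, h⟩ := exists_of_degree m.toAdd
  exact ⟨Quotient.mk (GenLoop.Homotopic.setoid (Fin 2) SpherePoset.x₁) f,
    congrArg Multiplicative.ofAdd (degree_eq h)⟩

end

end SpherePosetPi2

/-- The second homotopy group of the sphere poset `P₆(S²)` is isomorphic to `ℤ`. -/
theorem spherePoset_pi2 :
    Nonempty (π_ 2 SpherePoset SpherePoset.x₁ ≃* Multiplicative ℤ) := by
  exact ⟨MulEquiv.ofBijective SpherePosetPi2.degreeHom
    ⟨SpherePosetPi2.degreeHom_injective, SpherePosetPi2.degreeHom_surjective⟩⟩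
end
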